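/- Let (μ_t)_{t∈[0,1]} be a weakly continuous family of finite nonnegative Borel measures on Ω, and let Ξ : [0,1]×Ω → ℝ^d and ξ : [0,1]×Ω → ℝ be Borel maps with ∫₀¹ ∫_Ω ( |Ξ(t,x)|² + 4ξ(t,x)² ) dμ_t(x) dt < ∞. Assume the continuity equation with reaction holds in the distributional sense: for every continuously differentiable φ : ℝ^d → ℝ and every continuously differentiable ψ : ℝ → ℝ with compact support in (0,1), ∫₀¹ [ ψ'(t)·∫_Ω φ dμ_t + ψ(t)·∫_Ω ( ∇φ(x)·Ξ(t,x) + 4ξ(t,x)φ(x) ) dμ_t(x) ] dt = 0. Then for all 0 ≤ s ≤ t ≤ 1, HK(μ_s, μ_t) ≤ ∫_s^t ( ∫_Ω (|Ξ(r,x)|² + 4ξ(r,x)²) dμ_r(x) )^{1/2} dr; in particular the curve t ↦ μ_t is absolutely continuous with respect to HK. -/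

import Mathlib

/-!
The inequality is proved on the dual side of the Hellinger–Kantorovich problem, so that neither
the flow of the (merely measurable) fields nor a gluing of transport plans is needed.

*Duality.* `HK2_le_of_dual`: to bound `HK(μ₀, μ₁)²` by `D` it is enough to bound
`∫ φ₀ dμ₀ + ∫ φ₁ dμ₁` by `D` for all continuous pairs with `r₀² φ₀(x₀) + r₁² φ₁(x₁) ≤ d_C²`. By
homogeneity plans can be taken on the compact set `r₀² + r₁² = 1`, where the statement follows from
Hahn–Banach and Riesz–Markov–Kakutani.

*Hopf–Lax evolution.* Put `w = -φ₀` and `φ = φ₁`, extended to `ℝ^d` by the nearest-point projection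
onto `Ω`; the projection is a contraction, so the constraint survives. The triangle inequality of the
cone shows that the functions `u_τ = hopfLax w τ`, which start at `w` and stay above `φ`, satisfy
`u_{τ+Δ}(x₁) ≤ r² u_τ(x₀) + d_C((x₀, r), (x₁, 1))² / Δ` (`hopfLax_step`). This is an integrated form
of the Hamilton–Jacobi inequality `∂_τ u + u² + |∇u|² / 4 ≤ 0`. It is invariant under translations
and linear in `u`, so it persists for mollifications of `u_τ`, which are bounded in `C²` uniformly in
`τ`; for these it yields `u_{τ+Δ} ≤ u_τ - Δ (u_τ² + |∇u_τ|² / 4) + O(Δ²)`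
(`C2Bound.hamiltonJacobi_step`).

*Continuity equation.* By the du Bois-Reymond lemma, `∫ φ dμ_b - ∫ φ dμ_a` is the integral over
`[a, b]` of `∫ (∇φ · Ξ + 4 ξ φ) dμ_r` for each bounded `φ` of class `C¹` with bounded derivative
(`ReactionFlow.integral_sub_integral`). With the action `A = ∫ (|Ξ|² + 4 ξ²) dμ_r` and
`h = ∫ (φ² + |∇φ|² / 4) dμ_r`, Young's inequality bounds the integrand by `√A (L + h / L)` for every
`L > 0` (`ReactionFlow.rate_le`).

*Conclusion.* Let `L` be at least the length `Λ = ∫_s^t √A`. Divide `[s, t]` into `N` pieces, each of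
length at most `L / N` with respect to `√A dr`, and let the Hopf–Lax time advance by `Δ = 1 / N` on
each of them. On a piece of length `λ`, the gain `λ h / L ≤ Δ h` is absorbed by the Hamilton–Jacobi
decay `-Δ h`, which leaves `L λ + O(Δ²)` (`ReactionFlow.step`). Summation (`chain_le`) and `N → ∞`
give the dual bound `L Λ`, and `L ↓ Λ` gives `HK(μ_s, μ_t)² ≤ Λ²`.
-/

open MeasureTheory Set
open scoped NNReal ENNReal

/-- The ambient Euclidean space `ℝ^d`. -/
noncomputable abbrev Euc (d : ℕ) := EuclideanSpace ℝ (Fin d)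

/-- `cos_π(a) := cos (min |a| π)`. -/
noncomputable def cosPi (a : ℝ) : ℝ := Real.cos (min |a| Real.pi)

/-- The cone distance on `ℝ^d × [0,∞)`:
`d_C((x₀,r₀),(x₁,r₁)) = √(r₀² + r₁² − 2r₀r₁ cos_π(|x₁−x₀|))`.
All points with `r = 0` are identified with the tip of the cone. -/
noncomputable def coneDist {d : ℕ} (z₀ z₁ : Euc d × ℝ≥0) : ℝ :=
  Real.sqrt ((z₀.2 : ℝ)^2 + (z₁.2 : ℝ)^2
    - 2 * (z₀.2 : ℝ) * (z₁.2 : ℝ) * cosPi (dist z₁.1 z₀.1))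

/-- `γ` is a plan on (the cone over) `Ω` with homogeneous marginals `(μ₀, μ₁)`:
a finite nonnegative Borel measure on `(Ω×[0,∞))²` such that
`∬ rᵢ² φ(xᵢ) dγ = ∫ φ dμᵢ` for every (bounded) continuous `φ` and `i = 0,1`. -/
def IsHKPlan {d : ℕ} (Ω : Set (Euc d)) (γ : Measure ((Euc d × ℝ≥0) × (Euc d × ℝ≥0)))
    (μ₀ μ₁ : Measure (Euc d)) : Prop :=
  IsFiniteMeasure γ ∧
  γ (((Ω ×ˢ (univ : Set ℝ≥0)) ×ˢ (Ω ×ˢ (univ : Set ℝ≥0)))ᶜ) = 0 ∧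
  (∀ φ : BoundedContinuousFunction (Euc d) ℝ,
    ∫ p, (p.1.2 : ℝ)^2 * φ p.1.1 ∂γ = ∫ x, φ x ∂μ₀) ∧
  (∀ φ : BoundedContinuousFunction (Euc d) ℝ,
    ∫ p, (p.2.2 : ℝ)^2 * φ p.2.1 ∂γ = ∫ x, φ x ∂μ₁)

/-- The squared Hellinger–Kantorovich distance:
`HK(μ₀,μ₁)² = inf { ∬ d_C(z₀,z₁)² dγ : γ a plan with homogeneous marginals (μ₀,μ₁) }`. -/
noncomputable def HK2 {d : ℕ} (Ω : Set (Euc d)) (μ₀ μ₁ : Measure (Euc d)) : ℝ :=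
  sInf { I : ℝ | ∃ γ, IsHKPlan Ω γ μ₀ μ₁ ∧ I = ∫ p, (coneDist p.1 p.2)^2 ∂γ }

/-- The Hellinger–Kantorovich distance on finite nonnegative Borel measures on `Ω`. -/
noncomputable def HK {d : ℕ} (Ω : Set (Euc d)) (μ₀ μ₁ : Measure (Euc d)) : ℝ :=
  Real.sqrt (HK2 Ω μ₀ μ₁)

/-! ### Cone geometry -/

lemma cosPi_le_one (a : ℝ) : cosPi a ≤ 1 := Real.cos_le_one _

lemma cosPi_zero : cosPi 0 = 1 := by
  simp [cosPi, Real.pi_pos.le]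

lemma continuous_cosPi : Continuous cosPi := by
  unfold cosPi; fun_prop

lemma cosPi_anti {a b : ℝ} (ha : 0 ≤ a) (hab : a ≤ b) : cosPi b ≤ cosPi a := by
  unfold cosPi
  apply Real.cos_le_cos_of_nonneg_of_le_pi
  · exact le_min (abs_nonneg _) Real.pi_pos.le
  · exact min_le_right _ _
  · rw [abs_of_nonneg ha, abs_of_nonneg (ha.trans hab)]
    exact min_le_min_right _ hab

lemma one_sub_sq_le_cosPi (a : ℝ) : 1 - a ^ 2 / 2 ≤ cosPi a := by
  have h := Real.one_sub_sq_div_two_le_cos (x := min |a| Real.pi)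
  have h0 : 0 ≤ min |a| Real.pi := le_min (abs_nonneg _) Real.pi_pos.le
  have h1 : (min |a| Real.pi) ^ 2 ≤ a ^ 2 := by
    rw [← sq_abs a]; exact pow_le_pow_left₀ h0 (min_le_left _ _) 2
  unfold cosPi; linarith

/-- The squared cone distance, with real radii. -/
noncomputable def coneSq {d : ℕ} (x₀ : Euc d) (r₀ : ℝ) (x₁ : Euc d) (r₁ : ℝ) : ℝ :=
  r₀ ^ 2 + r₁ ^ 2 - 2 * r₀ * r₁ * cosPi (dist x₁ x₀)

section cone
variable {d : ℕ}

lemma coneSq_nonneg (x₀ : Euc d) {r₀ : ℝ} (h₀ : 0 ≤ r₀) (x₁ : Euc d) {r₁ : ℝ} (h₁ : 0 ≤ r₁) :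
    0 ≤ coneSq x₀ r₀ x₁ r₁ := by
  unfold coneSq
  nlinarith [cosPi_le_one (dist x₁ x₀), mul_nonneg h₀ h₁, sq_nonneg (r₀ - r₁)]

lemma coneDist_sq (z₀ z₁ : Euc d × ℝ≥0) :
    coneDist z₀ z₁ ^ 2 = coneSq z₀.1 z₀.2 z₁.1 z₁.2 :=
  Real.sq_sqrt (coneSq_nonneg _ z₀.2.2 _ z₁.2.2)

lemma coneSq_self (x : Euc d) (r : ℝ) : coneSq x r x r = 0 := by
  simp [coneSq, cosPi_zero]; ring

lemma coneSq_smul (c : ℝ) (x₀ : Euc d) (r₀ : ℝ) (x₁ : Euc d) (r₁ : ℝ) :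
    coneSq x₀ (c * r₀) x₁ (c * r₁) = c ^ 2 * coneSq x₀ r₀ x₁ r₁ := by
  unfold coneSq; ring

/-- The triangle inequality in the plane, with distances given by the law of cosines. -/
lemma planar_triangle (r₀ r₁ r₂ a b : ℝ) :
    √(r₀ ^ 2 + r₂ ^ 2 - 2 * r₀ * r₂ * Real.cos (a + b)) ≤
      √(r₀ ^ 2 + r₁ ^ 2 - 2 * r₀ * r₁ * Real.cos a)
        + √(r₁ ^ 2 + r₂ ^ 2 - 2 * r₁ * r₂ * Real.cos b) := by
  have key : ∀ r s x y : ℝ,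
      ‖(⟨r * Real.cos x, r * Real.sin x⟩ : ℂ) - ⟨s * Real.cos y, s * Real.sin y⟩‖ =
        √(r ^ 2 + s ^ 2 - 2 * r * s * Real.cos (y - x)) := by
    intro r s x y
    rw [Complex.norm_def, Complex.normSq_apply, Real.cos_sub]
    congr 1
    simp only [Complex.sub_re, Complex.sub_im]
    linear_combination r ^ 2 * Real.sin_sq_add_cos_sq x + s ^ 2 * Real.sin_sq_add_cos_sq y
  have h := norm_sub_le_norm_sub_add_norm_sub
    (⟨r₀ * Real.cos (-a), r₀ * Real.sin (-a)⟩ : ℂ) ⟨r₁ * Real.cos 0, r₁ * Real.sin 0⟩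
    ⟨r₂ * Real.cos b, r₂ * Real.sin b⟩
  rw [key, key, key] at h
  simpa [add_comm] using h

/-- The triangle inequality for the cone distance. The angles are truncated so that their sum is
at most `π`; the planar inequality then applies. -/
lemma coneSq_triangle (x₀ x₁ x₂ : Euc d) {r₀ r₁ r₂ : ℝ} (h₀ : 0 ≤ r₀) (h₁ : 0 ≤ r₁)
    (h₂ : 0 ≤ r₂) :
    √(coneSq x₀ r₀ x₂ r₂) ≤ √(coneSq x₀ r₀ x₁ r₁) + √(coneSq x₁ r₁ x₂ r₂) := by
  set α := min |dist x₁ x₀| Real.pi with hα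
  set β := min |dist x₂ x₁| Real.pi with hβ
  set γ := min |dist x₂ x₀| Real.pi with hγ
  have hpi := Real.pi_pos
  have hα0 : 0 ≤ α := le_min (abs_nonneg _) hpi.le
  have hβ0 : 0 ≤ β := le_min (abs_nonneg _) hpi.le
  have hγ0 : 0 ≤ γ := le_min (abs_nonneg _) hpi.le
  have hαπ : α ≤ Real.pi := min_le_right _ _
  have hβπ : β ≤ Real.pi := min_le_right _ _
  have hγπ : γ ≤ Real.pi := min_le_right _ _
  have htri : γ ≤ α + β := by
    have := dist_triangle x₂ x₁ x₀
    rw [hα, hβ, hγ, abs_of_nonneg dist_nonneg, abs_of_nonneg dist_nonneg,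
      abs_of_nonneg dist_nonneg]
    have n1 := dist_nonneg (x := x₁) (y := x₀)
    have n2 := dist_nonneg (x := x₂) (y := x₁)
    rcases min_cases (dist x₁ x₀) Real.pi with h | h <;>
    rcases min_cases (dist x₂ x₁) Real.pi with h' | h' <;>
    rcases min_cases (dist x₂ x₀) Real.pi with h'' | h'' <;> linarith
  set β' := min β (Real.pi - α) with hβ'
  have hβ'0 : 0 ≤ β' := le_min hβ0 (by linarith)
  have h3 : γ ≤ α + β' := by
    rcases min_cases β (Real.pi - α) with h | h <;> linarith
  have h4 : α + β' ≤ Real.pi := by linarith [min_le_right β (Real.pi - α)]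
  have c1 : Real.cos (α + β') ≤ Real.cos γ := Real.cos_le_cos_of_nonneg_of_le_pi hγ0 h4 h3
  have c2 : Real.cos β ≤ Real.cos β' :=
    Real.cos_le_cos_of_nonneg_of_le_pi hβ'0 hβπ (min_le_left _ _)
  have e1 : coneSq x₀ r₀ x₁ r₁ = r₀ ^ 2 + r₁ ^ 2 - 2 * r₀ * r₁ * Real.cos α := rfl
  have e2 : coneSq x₁ r₁ x₂ r₂ = r₁ ^ 2 + r₂ ^ 2 - 2 * r₁ * r₂ * Real.cos β := rfl
  have e3 : coneSq x₀ r₀ x₂ r₂ = r₀ ^ 2 + r₂ ^ 2 - 2 * r₀ * r₂ * Real.cos γ := rfl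
  rw [e1, e2, e3]
  refine le_trans (Real.sqrt_le_sqrt ?_) ((planar_triangle r₀ r₁ r₂ α β').trans ?_)
  · nlinarith [mul_nonneg h₀ h₂]
  · gcongr

/-- The triangle inequality in the form needed for Hopf–Lax interpolation. -/
lemma coneSq_div_le (x₀ x₁ x₂ : Euc d) {r₀ r₁ r₂ : ℝ} (h₀ : 0 ≤ r₀) (h₁ : 0 ≤ r₁)
    (h₂ : 0 ≤ r₂) {σ τ : ℝ} (hσ : 0 < σ) (hτ : 0 < τ) :
    coneSq x₀ r₀ x₂ r₂ / (σ + τ) ≤ coneSq x₀ r₀ x₁ r₁ / σ + coneSq x₁ r₁ x₂ r₂ / τ := by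
  have ht := coneSq_triangle x₀ x₁ x₂ h₀ h₁ h₂
  set A := coneSq x₀ r₀ x₁ r₁ with hA
  set B := coneSq x₁ r₁ x₂ r₂ with hB
  have hA0 : 0 ≤ A := coneSq_nonneg _ h₀ _ h₁
  have hB0 : 0 ≤ B := coneSq_nonneg _ h₁ _ h₂
  have hC0 := coneSq_nonneg x₀ h₀ x₂ h₂
  have h5 : coneSq x₀ r₀ x₂ r₂ ≤ (√A + √B) ^ 2 := by
    rw [← Real.sq_sqrt hC0]; exact pow_le_pow_left₀ (Real.sqrt_nonneg _) ht 2
  have ha := Real.sq_sqrt hA0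
  have hb := Real.sq_sqrt hB0
  rw [div_add_div _ _ hσ.ne' hτ.ne', div_le_div_iff₀ (by positivity) (by positivity)]
  rw [← ha, ← hb]
  have : coneSq x₀ r₀ x₂ r₂ * (σ * τ) ≤ (√A + √B) ^ 2 * (σ * τ) := by gcongr
  nlinarith [sq_nonneg (√A * τ - √B * σ)]

end cone

/-! ### Duality for the Hellinger–Kantorovich problem -/

lemma le_of_forall_pos_mul {a b D : ℝ} (h : ∀ t : ℝ, 0 < t → a ≤ b + t * D) : a ≤ b := by
  refine le_of_forall_pos_le_add fun ε hε => ?_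
  have h1 := h (ε / (|D| + 1)) (by positivity)
  have h2 : ε / (|D| + 1) * D ≤ ε := by
    rw [div_mul_eq_mul_div, div_le_iff₀ (by positivity)]
    nlinarith [le_abs_self D]
  linarith

section duality
variable {d : ℕ}

open CompactlySupported

/-- Plans may be normalized by `r₀² + r₁² = 1`; with `p = r₀²` they live on this space, which is
compact when `Ω` is. -/
abbrev PlanSpace (Ω : Set (Euc d)) := Ω × Ω × unitInterval

/-- The squared cone distance on `PlanSpace Ω`. -/
noncomputable def unitCost (Ω : Set (Euc d)) (z : PlanSpace Ω) : ℝ :=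
  coneSq (z.1 : Euc d) (√(z.2.2 : ℝ)) (z.2.1 : Euc d) (√(1 - (z.2.2 : ℝ)))

lemma continuous_unitCost (Ω : Set (Euc d)) : Continuous (unitCost Ω) := by
  unfold unitCost coneSq
  have := continuous_cosPi
  fun_prop

lemma unitCost_nonneg (Ω : Set (Euc d)) (z : PlanSpace Ω) : 0 ≤ unitCost Ω z :=
  coneSq_nonneg _ (Real.sqrt_nonneg _) _ (Real.sqrt_nonneg _)

/-- The values of the sublinear functional `f ↦ inf {∫ φ₀ dμ₀ + ∫ φ₁ dμ₁ + t D}`, the infimum being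
over `t > 0` and `f ≤ p φ₀ + (1 - p) φ₁ + t c`. -/
def dualValues (Ω : Set (Euc d)) (μ₀ μ₁ : Measure (Euc d)) (D : ℝ)
    (f : C_c(PlanSpace Ω, ℝ)) : Set ℝ :=
  { I | ∃ (φ₀ φ₁ : BoundedContinuousFunction (Euc d) ℝ) (t : ℝ), 0 < t ∧
    (∀ z : PlanSpace Ω, f z ≤ (z.2.2 : ℝ) * φ₀ z.1 + (1 - (z.2.2 : ℝ)) * φ₁ z.2.1
      + t * unitCost Ω z) ∧
    I = ∫ x, φ₀ x ∂μ₀ + ∫ x, φ₁ x ∂μ₁ + t * D }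

/-- Weak duality: a finite bound `D` on the dual problem bounds the functional below. -/
lemma dualValues_bddBelow {Ω : Set (Euc d)} {μ₀ μ₁ : Measure (Euc d)}
    [IsFiniteMeasure μ₀] [IsFiniteMeasure μ₁] {D : ℝ}
    (hdual : ∀ φ₀ φ₁ : BoundedContinuousFunction (Euc d) ℝ,
      (∀ z : PlanSpace Ω,
        (z.2.2 : ℝ) * φ₀ z.1 + (1 - (z.2.2 : ℝ)) * φ₁ z.2.1 ≤ unitCost Ω z) →
      ∫ x, φ₀ x ∂μ₀ + ∫ x, φ₁ x ∂μ₁ ≤ D)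
    (f : C_c(PlanSpace Ω, ℝ)) {B : ℝ} (hB : ∀ z, -B ≤ f z) :
    -(B * (μ₀.real univ + μ₁.real univ)) ∈ lowerBounds (dualValues Ω μ₀ μ₁ D f) := by
  rintro _ ⟨φ₀, φ₁, t, ht, hle, rfl⟩
  have h := hdual (t⁻¹ • (-φ₀ - BoundedContinuousFunction.const _ B))
    (t⁻¹ • (-φ₁ - BoundedContinuousFunction.const _ B)) ?_
  · have i₀ := φ₀.integrable μ₀
    have i₁ := φ₁.integrable μ₁
    simp only [BoundedContinuousFunction.coe_smul, BoundedContinuousFunction.coe_sub,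
      BoundedContinuousFunction.coe_neg, Pi.sub_apply, Pi.neg_apply,
      BoundedContinuousFunction.const_apply, smul_eq_mul, integral_const_mul] at h
    rw [integral_sub (by simpa using i₀.neg) (integrable_const _),
      integral_sub (by simpa using i₁.neg) (integrable_const _), integral_neg, integral_neg] at h
    simp only [integral_const, smul_eq_mul] at h
    rw [← mul_add, inv_mul_le_iff₀ ht] at h
    linarith
  · intro z
    have h1 := hle z
    have h2 := hB z
    simp only [BoundedContinuousFunction.coe_smul, BoundedContinuousFunction.coe_sub,
      BoundedContinuousFunction.coe_neg, Pi.sub_apply, Pi.neg_apply,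
      BoundedContinuousFunction.const_apply, smul_eq_mul]
    have : (z.2.2 : ℝ) * (t⁻¹ * (-φ₀ z.1 - B)) + (1 - (z.2.2 : ℝ)) * (t⁻¹ * (-φ₁ z.2.1 - B))
      = t⁻¹ * (-((z.2.2 : ℝ) * φ₀ z.1 + (1 - (z.2.2 : ℝ)) * φ₁ z.2.1) - B) := by ring
    rw [this, inv_mul_le_iff₀ ht]
    linarith

/-- Strong duality for the Hellinger–Kantorovich problem. The Hahn–Banach theorem gives a linear
functional below `inf (dualValues · )`; it is positive, has the right marginals, and takes a value
at most `D` at the cost. The Riesz–Markov–Kakutani theorem represents it by a plan. -/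
theorem HK2_le_of_dual {Ω : Set (Euc d)} (hΩ : IsCompact Ω) {μ₀ μ₁ : Measure (Euc d)}
    [IsFiniteMeasure μ₀] [IsFiniteMeasure μ₁] {D : ℝ}
    (hdual : ∀ φ₀ φ₁ : BoundedContinuousFunction (Euc d) ℝ,
      (∀ z : PlanSpace Ω,
        (z.2.2 : ℝ) * φ₀ z.1 + (1 - (z.2.2 : ℝ)) * φ₁ z.2.1 ≤ unitCost Ω z) →
      ∫ x, φ₀ x ∂μ₀ + ∫ x, φ₁ x ∂μ₁ ≤ D) :
    HK2 Ω μ₀ μ₁ ≤ D := by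
  have : CompactSpace Ω := isCompact_iff_compactSpace.mp hΩ
  have hbound : ∀ f : C_c(PlanSpace Ω, ℝ), ∃ B : ℝ, ∀ z, |f z| ≤ B := by
    intro f
    obtain ⟨B, hB⟩ := isCompact_univ.exists_bound_of_continuousOn (f := f) f.continuous.continuousOn
    exact ⟨B, fun z => hB z (mem_univ _)⟩
  have hbdd : ∀ f : C_c(PlanSpace Ω, ℝ), BddBelow (dualValues Ω μ₀ μ₁ D f) := by
    intro f
    obtain ⟨B, hB⟩ := hbound f
    exact ⟨_, dualValues_bddBelow hdual f fun z => (abs_le.mp (hB z)).1⟩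
  have hne : ∀ f : C_c(PlanSpace Ω, ℝ), (dualValues Ω μ₀ μ₁ D f).Nonempty := by
    intro f
    obtain ⟨B, hB⟩ := hbound f
    refine ⟨_, BoundedContinuousFunction.const _ B, BoundedContinuousFunction.const _ B, 1,
      one_pos, fun z => ?_, rfl⟩
    simp only [BoundedContinuousFunction.const_apply]
    have := (abs_le.mp (hB z)).2
    have := unitCost_nonneg Ω z
    linarith
  have hsmul : ∀ c : ℝ, 0 < c → ∀ f : C_c(PlanSpace Ω, ℝ),
      sInf (dualValues Ω μ₀ μ₁ D (c • f)) ≤ c * sInf (dualValues Ω μ₀ μ₁ D f) := by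
    intro c hc f
    rw [← div_le_iff₀' hc]
    refine le_csInf (hne f) ?_
    rintro _ ⟨φ₀, φ₁, t, ht, hle, rfl⟩
    rw [div_le_iff₀' hc]
    refine csInf_le (hbdd _) ⟨c • φ₀, c • φ₁, c * t, by positivity, fun z => ?_, ?_⟩
    · have := mul_le_mul_of_nonneg_left (hle z) hc.le
      simp only [CompactlySupportedContinuousMap.coe_smul, Pi.smul_apply, smul_eq_mul,
        BoundedContinuousFunction.coe_smul]
      linarith
    · simp only [BoundedContinuousFunction.coe_smul, smul_eq_mul, integral_const_mul]
      ring
  obtain ⟨L, -, hL⟩ := exists_extension_of_le_sublinear (E := C_c(PlanSpace Ω, ℝ)) ⊥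
    (fun f => sInf (dualValues Ω μ₀ μ₁ D f))
    (by
      intro c hc f
      refine le_antisymm (hsmul c hc f) ?_
      have := hsmul c⁻¹ (inv_pos.mpr hc) (c • f)
      rw [smul_smul, inv_mul_cancel₀ hc.ne', one_smul] at this
      rwa [inv_mul_eq_div, le_div_iff₀' hc] at this)
    (by
      intro f g
      have key : ∀ I ∈ dualValues Ω μ₀ μ₁ D f, ∀ J ∈ dualValues Ω μ₀ μ₁ D g,
          sInf (dualValues Ω μ₀ μ₁ D (f + g)) ≤ I + J := by
        rintro _ ⟨φ₀, φ₁, t, ht, hle, rfl⟩ _ ⟨ψ₀, ψ₁, s, hs, hle', rfl⟩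
        refine csInf_le (hbdd _) ⟨φ₀ + ψ₀, φ₁ + ψ₁, t + s, by positivity, fun z => ?_, ?_⟩
        · have h1 := hle z
          have h2 := hle' z
          simp only [CompactlySupportedContinuousMap.coe_add, Pi.add_apply,
            BoundedContinuousFunction.coe_add]
          linarith
        · simp only [BoundedContinuousFunction.coe_add, Pi.add_apply]
          rw [integral_add (φ₀.integrable _) (ψ₀.integrable _),
            integral_add (φ₁.integrable _) (ψ₁.integrable _)]
          ring
      have h1 : ∀ J ∈ dualValues Ω μ₀ μ₁ D g, sInf (dualValues Ω μ₀ μ₁ D (f + g)) - J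
          ≤ sInf (dualValues Ω μ₀ μ₁ D f) := fun J hJ =>
        le_csInf (hne f) fun I hI => by linarith [key I hI J hJ]
      have h2 : sInf (dualValues Ω μ₀ μ₁ D (f + g)) - sInf (dualValues Ω μ₀ μ₁ D f)
          ≤ sInf (dualValues Ω μ₀ μ₁ D g) :=
        le_csInf (hne g) fun J hJ => by linarith [h1 J hJ]
      linarith)
    (by
      rintro ⟨f, hf⟩
      obtain rfl : f = 0 := (Submodule.mem_bot ℝ).mp hf
      have h0 : (⊥ : C_c(PlanSpace Ω, ℝ) →ₗ.[ℝ] ℝ) ⟨0, hf⟩ = 0 := LinearPMap.map_zero _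
      rw [h0]
      refine le_csInf (hne 0) ?_
      intro I hI
      have := dualValues_bddBelow hdual (0 : C_c(PlanSpace Ω, ℝ)) (B := 0) (by intro z; simp) hI
      simpa using this)
  have hLle : ∀ (f : C_c(PlanSpace Ω, ℝ)) (φ₀ φ₁ : BoundedContinuousFunction (Euc d) ℝ) (t : ℝ), 0 < t →
      (∀ z : PlanSpace Ω, f z ≤ (z.2.2 : ℝ) * φ₀ z.1 + (1 - (z.2.2 : ℝ)) * φ₁ z.2.1 + t * unitCost Ω z) →
      L f ≤ ∫ x, φ₀ x ∂μ₀ + ∫ x, φ₁ x ∂μ₁ + t * D :=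
    fun f φ₀ φ₁ t ht h => (hL f).trans (csInf_le (hbdd f) ⟨φ₀, φ₁, t, ht, h, rfl⟩)
  have hLpos : ∀ f : C_c(PlanSpace Ω, ℝ), 0 ≤ f → 0 ≤ L f := by
    intro f hf
    have : L (-f) ≤ 0 := by
      refine le_of_forall_pos_mul (D := D) fun t ht => ?_
      have := hLle (-f) 0 0 t ht (fun z => ?_)
      · simpa using this
      · have h1 : 0 ≤ f z := hf z
        have h2 := mul_nonneg ht.le (unitCost_nonneg Ω z)
        simp; linarith
    simpa using this
  let Λ : C_c(PlanSpace Ω, ℝ) →ₚ[ℝ] ℝ := PositiveLinearMap.mk₀ L hLpos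
  let γ₀ : Measure (PlanSpace Ω) := RealRMK.rieszMeasure Λ
  have : IsFiniteMeasure γ₀ := by
    constructor
    exact isCompact_univ.measure_lt_top
  have hintg : ∀ f : C(PlanSpace Ω, ℝ), ∫ z, f z ∂γ₀ = L (CompactlySupportedContinuousMap.continuousMapEquiv f) :=
    fun f => RealRMK.integral_rieszMeasure Λ (CompactlySupportedContinuousMap.continuousMapEquiv f)
  let Φ : PlanSpace Ω → (Euc d × ℝ≥0) × (Euc d × ℝ≥0) := fun z =>
    (((z.1 : Euc d), Real.toNNReal (√(z.2.2 : ℝ))),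
      ((z.2.1 : Euc d), Real.toNNReal (√(1 - (z.2.2 : ℝ)))))
  have hΦ : Continuous Φ := by fun_prop
  have hp0 : ∀ z : PlanSpace Ω, 0 ≤ (z.2.2 : ℝ) := fun z => z.2.2.2.1
  have hp1 : ∀ z : PlanSpace Ω, 0 ≤ 1 - (z.2.2 : ℝ) := fun z => sub_nonneg.mpr z.2.2.2.2
  have hmap : ∀ g : (Euc d × ℝ≥0) × (Euc d × ℝ≥0) → ℝ, Continuous g →
      ∫ p, g p ∂(γ₀.map Φ) = ∫ z, g (Φ z) ∂γ₀ := fun g hg =>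
    integral_map hΦ.measurable.aemeasurable hg.aestronglyMeasurable
  have hcd : ∀ p : (Euc d × ℝ≥0) × (Euc d × ℝ≥0), 0 ≤ coneDist p.1 p.2 ^ 2 :=
    fun p => sq_nonneg _
  have hcost : ∫ p, (coneDist p.1 p.2) ^ 2 ∂(γ₀.map Φ) ≤ D := by
    rw [hmap _ (by
      unfold coneDist
      have := continuous_cosPi
      fun_prop)]
    have h1 : ∀ z : PlanSpace Ω, coneDist (Φ z).1 (Φ z).2 ^ 2 = unitCost Ω z := by
      intro z
      rw [coneDist_sq]
      simp only [Φ, unitCost, Real.coe_toNNReal _ (Real.sqrt_nonneg _)]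
    simp_rw [h1]
    rw [show (∫ z, unitCost Ω z ∂γ₀) = _ from hintg ⟨unitCost Ω, continuous_unitCost Ω⟩]
    have := hLle (CompactlySupportedContinuousMap.continuousMapEquiv
      (⟨unitCost Ω, continuous_unitCost Ω⟩ : C(PlanSpace Ω, ℝ))) 0 0 1 one_pos (fun z => by simp)
    simpa using this
  refine le_trans (csInf_le ⟨0, ?_⟩ ⟨γ₀.map Φ, ⟨?_, ?_, ?_, ?_⟩, rfl⟩) hcost
  · rintro _ ⟨γ, -, rfl⟩
    exact integral_nonneg hcd
  · exact Measure.isFiniteMeasure_map _ _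
  · rw [Measure.map_apply hΦ.measurable]
    · convert measure_empty (μ := γ₀)
      ext z
      simp [Φ]
    · exact ((hΩ.measurableSet.prod MeasurableSet.univ).prod
        (hΩ.measurableSet.prod MeasurableSet.univ)).compl
  · have aux : ∀ (φ : BoundedContinuousFunction (Euc d) ℝ) (h : Continuous fun z : PlanSpace Ω =>
        (z.2.2 : ℝ) * φ z.1),
        L (CompactlySupportedContinuousMap.continuousMapEquiv ⟨_, h⟩) ≤ ∫ x, φ x ∂μ₀ := by
      intro φ h
      refine le_of_forall_pos_mul (D := D) fun t ht => ?_
      have := hLle (φ₀ := φ) (φ₁ := 0) (t := t) ht (fun z => ?_) (f := CompactlySupportedContinuousMap.continuousMapEquiv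
        (⟨_, h⟩ : C(PlanSpace Ω, ℝ)))
      · simpa using this
      · have := mul_nonneg ht.le (unitCost_nonneg Ω z)
        simp; exact unitCost_nonneg Ω z |> fun h => by positivity
    intro φ
    have hc : ∀ φ : BoundedContinuousFunction (Euc d) ℝ, Continuous fun z : PlanSpace Ω =>
        (z.2.2 : ℝ) * φ z.1 := by intro φ; fun_prop
    rw [hmap (fun p => (p.1.2 : ℝ) ^ 2 * φ p.1.1) (by fun_prop)]
    have h1 : ∀ z : PlanSpace Ω, ((Φ z).1.2 : ℝ) ^ 2 * φ (Φ z).1.1 = (z.2.2 : ℝ) * φ z.1 := by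
      intro z
      simp only [Φ, Real.coe_toNNReal _ (Real.sqrt_nonneg _), Real.sq_sqrt (hp0 z)]
    simp_rw [h1]
    rw [show (∫ z : PlanSpace Ω, (z.2.2 : ℝ) * φ z.1 ∂γ₀) = _ from hintg ⟨_, hc φ⟩]
    refine le_antisymm (aux φ (hc φ)) ?_
    have h2 := aux (-φ) (hc (-φ))
    have h3 : CompactlySupportedContinuousMap.continuousMapEquiv (⟨_, hc (-φ)⟩ : C(PlanSpace Ω, ℝ))
      = -CompactlySupportedContinuousMap.continuousMapEquiv (⟨_, hc φ⟩ : C(PlanSpace Ω, ℝ)) := by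
      ext z; simp
    rw [h3, map_neg] at h2
    simp only [BoundedContinuousFunction.coe_neg, Pi.neg_apply, integral_neg] at h2
    linarith
  · have aux : ∀ (φ : BoundedContinuousFunction (Euc d) ℝ) (h : Continuous fun z : PlanSpace Ω =>
        (1 - (z.2.2 : ℝ)) * φ z.2.1),
        L (CompactlySupportedContinuousMap.continuousMapEquiv ⟨_, h⟩) ≤ ∫ x, φ x ∂μ₁ := by
      intro φ h
      refine le_of_forall_pos_mul (D := D) fun t ht => ?_
      have := hLle (φ₀ := 0) (φ₁ := φ) (t := t) ht (fun z => ?_) (f := CompactlySupportedContinuousMap.continuousMapEquiv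
        (⟨_, h⟩ : C(PlanSpace Ω, ℝ)))
      · simpa using this
      · have := mul_nonneg ht.le (unitCost_nonneg Ω z)
        simp; exact unitCost_nonneg Ω z |> fun h => by positivity
    intro φ
    have hc : ∀ φ : BoundedContinuousFunction (Euc d) ℝ, Continuous fun z : PlanSpace Ω =>
        (1 - (z.2.2 : ℝ)) * φ z.2.1 := by intro φ; fun_prop
    rw [hmap (fun p => (p.2.2 : ℝ) ^ 2 * φ p.2.1) (by fun_prop)]
    have h1 : ∀ z : PlanSpace Ω, ((Φ z).2.2 : ℝ) ^ 2 * φ (Φ z).2.1 = (1 - (z.2.2 : ℝ)) * φ z.2.1 := by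
      intro z
      simp only [Φ, Real.coe_toNNReal _ (Real.sqrt_nonneg _), Real.sq_sqrt (hp1 z)]
    simp_rw [h1]
    rw [show (∫ z : PlanSpace Ω, (1 - (z.2.2 : ℝ)) * φ z.2.1 ∂γ₀) = _ from hintg ⟨_, hc φ⟩]
    refine le_antisymm (aux φ (hc φ)) ?_
    have h2 := aux (-φ) (hc (-φ))
    have h3 : CompactlySupportedContinuousMap.continuousMapEquiv (⟨_, hc (-φ)⟩ : C(PlanSpace Ω, ℝ))
      = -CompactlySupportedContinuousMap.continuousMapEquiv (⟨_, hc φ⟩ : C(PlanSpace Ω, ℝ)) := by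
      ext z; simp
    rw [h3, map_neg] at h2
    simp only [BoundedContinuousFunction.coe_neg, Pi.neg_apply, integral_neg] at h2
    linarith

end duality

/-! ### Hopf–Lax interpolation on the cone -/

section hopfLax
variable {d : ℕ}

/-- The Hopf–Lax interpolation of `w` for the cone distance: the value at radius one of the
`2`-homogeneous function `z ↦ inf_q (r_q² w(x_q) + d_C(q, z)² / τ)`. At `τ = 0` it is `w`. -/
noncomputable def hopfLax (w : Euc d → ℝ) (τ : ℝ) (x : Euc d) : ℝ :=
  if τ ≤ 0 then w x
  else ⨅ q : Euc d × ℝ≥0, ((q.2 : ℝ) ^ 2 * w q.1 + coneSq q.1 q.2 x 1 / τ)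

variable {w φ : Euc d → ℝ}

lemma hopfLax_lower (H : ∀ x₀ x₁ : Euc d, ∀ r : ℝ, 0 ≤ r → φ x₁ ≤ r ^ 2 * w x₀ + coneSq x₀ r x₁ 1)
    {τ : ℝ} (hτ : 0 < τ) (hτ1 : τ ≤ 1) (x : Euc d) (q : Euc d × ℝ≥0) :
    φ x ≤ (q.2 : ℝ) ^ 2 * w q.1 + coneSq q.1 q.2 x 1 / τ := by
  refine (H q.1 x q.2 q.2.2).trans ?_
  gcongr
  exact le_div_self (coneSq_nonneg _ q.2.2 _ zero_le_one) hτ hτ1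

lemma hopfLax_bdd (H : ∀ x₀ x₁ : Euc d, ∀ r : ℝ, 0 ≤ r → φ x₁ ≤ r ^ 2 * w x₀ + coneSq x₀ r x₁ 1)
    {τ : ℝ} (hτ : 0 < τ) (hτ1 : τ ≤ 1) (x : Euc d) :
    BddBelow (range fun q : Euc d × ℝ≥0 => (q.2 : ℝ) ^ 2 * w q.1 + coneSq q.1 q.2 x 1 / τ) :=
  ⟨φ x, by rintro _ ⟨q, rfl⟩; exact hopfLax_lower H hτ hτ1 x q⟩

lemma hopfLax_zero (x : Euc d) : hopfLax w 0 x = w x := by simp [hopfLax]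

lemma le_hopfLax (H : ∀ x₀ x₁ : Euc d, ∀ r : ℝ, 0 ≤ r → φ x₁ ≤ r ^ 2 * w x₀ + coneSq x₀ r x₁ 1)
    {τ : ℝ} (hτ1 : τ ≤ 1) (x : Euc d) : φ x ≤ hopfLax w τ x := by
  unfold hopfLax
  split_ifs with h
  · simpa [coneSq_self] using H x x 1 zero_le_one
  · exact le_ciInf fun q => hopfLax_lower H (not_le.mp h) hτ1 x q

lemma hopfLax_le (H : ∀ x₀ x₁ : Euc d, ∀ r : ℝ, 0 ≤ r → φ x₁ ≤ r ^ 2 * w x₀ + coneSq x₀ r x₁ 1)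
    {τ : ℝ} (hτ1 : τ ≤ 1) (x : Euc d) : hopfLax w τ x ≤ w x := by
  unfold hopfLax
  split_ifs with h
  · exact le_rfl
  · refine (ciInf_le (hopfLax_bdd H (not_le.mp h) hτ1 x) (x, 1)).trans ?_
    simp [coneSq_self]

lemma measurable_hopfLax
    (H : ∀ x₀ x₁ : Euc d, ∀ r : ℝ, 0 ≤ r → φ x₁ ≤ r ^ 2 * w x₀ + coneSq x₀ r x₁ 1)
    (hw : Continuous w) {τ : ℝ} (hτ1 : τ ≤ 1) : Measurable (hopfLax w τ) := by
  by_cases h : τ ≤ 0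
  · have : hopfLax w τ = w := by ext x; simp [hopfLax, h]
    rw [this]; exact hw.measurable
  · have : hopfLax w τ = fun x =>
        ⨅ q : Euc d × ℝ≥0, ((q.2 : ℝ) ^ 2 * w q.1 + coneSq q.1 q.2 x 1 / τ) := by
      ext x; simp [hopfLax, h]
    rw [this]
    refine (upperSemicontinuous_ciInf (hopfLax_bdd H (not_le.mp h) hτ1) fun q => ?_).measurable
    refine Continuous.upperSemicontinuous ?_
    unfold coneSq
    have := continuous_cosPi
    fun_prop

/-- The dynamic programming inequality, which encodes `∂_τ u + |∇u|² / 4 + u² ≤ 0`. -/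
lemma hopfLax_step
    (H : ∀ x₀ x₁ : Euc d, ∀ r : ℝ, 0 ≤ r → φ x₁ ≤ r ^ 2 * w x₀ + coneSq x₀ r x₁ 1)
    {τ Δ : ℝ} (hτ : 0 ≤ τ) (hΔ : 0 < Δ) (h1 : τ + Δ ≤ 1) (x₀ x₁ : Euc d) {r : ℝ} (hr : 0 ≤ r) :
    hopfLax w (τ + Δ) x₁ ≤ r ^ 2 * hopfLax w τ x₀ + coneSq x₀ r x₁ 1 / Δ := by
  lift r to ℝ≥0 using hr
  have hpos : 0 < τ + Δ := by linarith
  have hle : ∀ q : Euc d × ℝ≥0, hopfLax w (τ + Δ) x₁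
      ≤ (q.2 : ℝ) ^ 2 * w q.1 + coneSq q.1 q.2 x₁ 1 / (τ + Δ) := by
    intro q
    unfold hopfLax
    rw [if_neg (not_le.mpr hpos)]
    exact ciInf_le (hopfLax_bdd H hpos h1 x₁) q
  rcases hτ.eq_or_lt with rfl | hτ
  · have := hle (x₀, r)
    simpa [hopfLax_zero] using this
  · have h2 : hopfLax w τ x₀
        = ⨅ q : Euc d × ℝ≥0, ((q.2 : ℝ) ^ 2 * w q.1 + coneSq q.1 q.2 x₀ 1 / τ) := by
      simp [hopfLax, not_le.mpr hτ]
    rw [h2, Real.mul_iInf_of_nonneg (sq_nonneg (r : ℝ)), ← sub_le_iff_le_add]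
    refine le_ciInf fun q => ?_
    have h3 := hle (q.1, r * q.2)
    have h4 := coneSq_div_le q.1 x₀ x₁ (mul_nonneg r.coe_nonneg q.2.coe_nonneg) r.coe_nonneg zero_le_one hτ hΔ
    have h5 := coneSq_smul r q.1 q.2 x₀ 1
    rw [mul_one] at h5
    rw [NNReal.coe_mul] at h3
    rw [h5, mul_div_assoc] at h4
    have h6 : ((r : ℝ) * (q.2 : ℝ)) ^ 2 * w q.1 = r ^ 2 * ((q.2 : ℝ) ^ 2 * w q.1) := by ring
    rw [h6] at h3
    linarith

end hopfLax

/-! ### Mollification and the Hamilton–Jacobi inequality -/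

section mollify
variable {d : ℕ}

open scoped Convolution ContDiff
open ContinuousLinearMap

/-- Bounds on a function and its first two derivatives. -/
structure C2Bound (C : ℝ) (V : Euc d → ℝ) : Prop where
  contDiff : ContDiff ℝ 2 V
  bound : ∀ x, |V x| ≤ C
  bound_fderiv : ∀ x, ‖fderiv ℝ V x‖ ≤ C
  bound_fderiv₂ : ∀ x, ‖fderiv ℝ (fderiv ℝ V) x‖ ≤ C

lemma norm_convolution_le {E F G : Type*} [NormedAddCommGroup E] [NormedSpace ℝ E] [FiniteDimensional ℝ E]
    [MeasureSpace E] [BorelSpace E] [(volume : Measure E).IsAddHaarMeasure] [NormedAddCommGroup F] [NormedSpace ℝ F]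
    [NormedAddCommGroup G] [NormedSpace ℝ G] (L : F →L[ℝ] ℝ →L[ℝ] G) {η : E → F}
    (hη : Continuous η) (hηc : HasCompactSupport η) {u : E → ℝ} {B : ℝ}
    (hB : ∀ x, |u x| ≤ B) (x : E) :
    ‖(η ⋆[L, volume] u) x‖ ≤ ‖L‖ * B * ∫ t, ‖η t‖ := by
  rw [convolution_def, ← integral_const_mul]
  refine norm_integral_le_of_norm_le ((hη.integrable_of_hasCompactSupport hηc).norm.const_mul _) ?_
  refine Filter.Eventually.of_forall fun t => ?_
  refine (L.le_opNorm₂ _ _).trans ?_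
  have := hB (x - t)
  rw [← Real.norm_eq_abs] at this
  calc ‖L‖ * ‖η t‖ * ‖u (x - t)‖ ≤ ‖L‖ * ‖η t‖ * B := by gcongr
    _ = _ := by ring

lemma locallyIntegrable_of_bound {E : Type*} [NormedAddCommGroup E] [NormedSpace ℝ E] [FiniteDimensional ℝ E]
    [MeasureSpace E] [BorelSpace E] [(volume : Measure E).IsAddHaarMeasure] {u : E → ℝ} {B : ℝ} (hu : Measurable u)
    (hB : ∀ x, |u x| ≤ B) : LocallyIntegrable u volume := by
  refine (locallyIntegrable_const B).mono hu.aestronglyMeasurable ?_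
  refine Filter.Eventually.of_forall fun x => ?_
  rw [Real.norm_eq_abs]; exact (hB x).trans (le_abs_self B)

set_option maxSynthPendingDepth 3 in
lemma exists_fderiv_convolution_le {E F G : Type*} [NormedAddCommGroup E] [NormedSpace ℝ E] [FiniteDimensional ℝ E]
    [MeasureSpace E] [BorelSpace E] [(volume : Measure E).IsAddHaarMeasure] [NormedAddCommGroup F] [NormedSpace ℝ F]
    [NormedAddCommGroup G] [NormedSpace ℝ G] (L : F →L[ℝ] ℝ →L[ℝ] G) {η : E → F}
    (hη : ContDiff ℝ ∞ η) (hηc : HasCompactSupport η) (B : ℝ) :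
    ∃ C : ℝ, ∀ u : E → ℝ, Measurable u → (∀ x, |u x| ≤ B) →
      fderiv ℝ (η ⋆[L, volume] u) = (fderiv ℝ η ⋆[L.precompL (E), volume] u) ∧
        ∀ x, ‖fderiv ℝ (η ⋆[L, volume] u) x‖ ≤ C := by
  refine ⟨‖L.precompL (E)‖ * B * ∫ t, ‖fderiv ℝ η t‖, fun u hu hB => ?_⟩
  have e1 : fderiv ℝ (η ⋆[L, volume] u) = (fderiv ℝ η ⋆[L.precompL (E), volume] u) := by
    ext1 x
    exact (hηc.hasFDerivAt_convolution_left L (hη.of_le (by simp))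
      (locallyIntegrable_of_bound hu hB) x).fderiv
  refine ⟨e1, fun x => ?_⟩
  rw [e1]
  exact norm_convolution_le _ (hη.continuous_fderiv (by simp)) (hηc.fderiv ℝ) hB x

set_option maxSynthPendingDepth 3 in
/-- Mollifications of uniformly bounded functions by a fixed kernel are uniformly bounded in `C²`. -/
lemma exists_C2Bound {η : Euc d → ℝ} (hη : ContDiff ℝ ∞ η) (hηc : HasCompactSupport η) (B : ℝ) :
    ∃ C : ℝ, ∀ u : Euc d → ℝ, Measurable u → (∀ x, |u x| ≤ B) →
      C2Bound C (η ⋆[lsmul ℝ ℝ, volume] u) := by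
  have hη1 : ContDiff ℝ ∞ (fderiv ℝ η) := hη.fderiv_right (by simp)
  obtain ⟨C₁, h₁⟩ := exists_fderiv_convolution_le (lsmul ℝ ℝ : ℝ →L[ℝ] ℝ →L[ℝ] ℝ) hη hηc B
  obtain ⟨C₂, h₂⟩ := exists_fderiv_convolution_le
    ((lsmul ℝ ℝ : ℝ →L[ℝ] ℝ →L[ℝ] ℝ).precompL (Euc d)) hη1 (hηc.fderiv ℝ) B
  refine ⟨max (‖(lsmul ℝ ℝ : ℝ →L[ℝ] ℝ →L[ℝ] ℝ)‖ * B * ∫ t, ‖η t‖) (max C₁ C₂),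
    fun u hu hB => ?_⟩
  obtain ⟨e1, b1⟩ := h₁ u hu hB
  obtain ⟨e2, b2⟩ := h₂ u hu hB
  refine ⟨?_, fun x => ?_, fun x => ?_, fun x => ?_⟩
  · exact_mod_cast hηc.contDiff_convolution_left (n := 2) (lsmul ℝ ℝ) (hη.of_le (by exact_mod_cast le_top))
      (locallyIntegrable_of_bound hu hB)
  · exact (norm_convolution_le (lsmul ℝ ℝ) hη.continuous hηc hB x).trans (le_max_left _ _)
  · exact (b1 x).trans ((le_max_left _ _).trans (le_max_right _ _))
  · rw [e1]
    exact (b2 x).trans ((le_max_right _ _).trans (le_max_right _ _))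

/-- The Hamiltonian `v² + |∇v|² / 4`. -/
noncomputable def hamiltonian (V : Euc d → ℝ) (x : Euc d) : ℝ := V x ^ 2 + ‖fderiv ℝ V x‖ ^ 2 / 4

lemma hamiltonian_nonneg (V : Euc d → ℝ) (x : Euc d) : 0 ≤ hamiltonian V x := by
  unfold hamiltonian; positivity

lemma norm_gradient (V : Euc d → ℝ) (x : Euc d) : ‖gradient V x‖ = ‖fderiv ℝ V x‖ :=
  (InnerProductSpace.toDual ℝ (Euc d)).symm.norm_map _

lemma fderiv_apply_gradient (V : Euc d → ℝ) (x : Euc d) :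
    fderiv ℝ V x (gradient V x) = ‖fderiv ℝ V x‖ ^ 2 := by
  rw [← norm_gradient, ← real_inner_self_eq_norm_sq]
  exact (InnerProductSpace.toDual_symm_apply (𝕜 := ℝ) (E := Euc d)).symm

/-- The Riesz isomorphism `StrongDual ℝ (Euc d) → Euc d` as a continuous linear map. -/
noncomputable def rieszSymm (d : ℕ) : StrongDual ℝ (Euc d) →L[ℝ] Euc d :=
  LinearMap.mkContinuous
    { toFun := (InnerProductSpace.toDual ℝ (Euc d)).symm
      map_add' := map_add _
      map_smul' := fun c x => by simp } 1 (fun x => by simp)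

lemma norm_rieszSymm (f : StrongDual ℝ (Euc d)) : ‖rieszSymm d f‖ = ‖f‖ :=
  (InnerProductSpace.toDual ℝ (Euc d)).symm.norm_map f

variable {C : ℝ} {V : Euc d → ℝ}

lemma C2Bound.nonneg (h : C2Bound C V) : 0 ≤ C := (abs_nonneg _).trans (h.bound 0)

lemma C2Bound.hamiltonian_le (h : C2Bound C V) (x : Euc d) : hamiltonian V x ≤ 2 * C ^ 2 := by
  have h1 : V x ^ 2 ≤ C ^ 2 := by
    rw [← sq_abs]; exact pow_le_pow_left₀ (abs_nonneg _) (h.bound x) 2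
  have h2 : ‖fderiv ℝ V x‖ ^ 2 ≤ C ^ 2 := pow_le_pow_left₀ (norm_nonneg _) (h.bound_fderiv x) 2
  unfold hamiltonian; nlinarith [sq_nonneg C]

lemma C2Bound.hasFDerivAt_hamiltonian (h : C2Bound C V) (x : Euc d) :
    HasFDerivAt (hamiltonian V) ((2 * V x) • fderiv ℝ V x + (2⁻¹ : ℝ) •
      (innerSL ℝ (gradient V x)).comp ((rieszSymm d).comp (fderiv ℝ (fderiv ℝ V) x))) x := by
  have h1 : HasFDerivAt V (fderiv ℝ V x) x :=
    (h.contDiff.differentiable (by norm_num) x).hasFDerivAt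
  have h2 : ContDiff ℝ 1 (fderiv ℝ V) := h.contDiff.fderiv_right (by norm_num)
  have h3 : HasFDerivAt (fderiv ℝ V) (fderiv ℝ (fderiv ℝ V) x) x :=
    (h2.differentiable (by norm_num) x).hasFDerivAt
  have h4 : HasFDerivAt (gradient V) ((rieszSymm d).comp (fderiv ℝ (fderiv ℝ V) x)) x :=
    (rieszSymm d).hasFDerivAt.comp x h3
  have h5 : hamiltonian V = fun x => V x ^ 2 + (4⁻¹ : ℝ) * ‖gradient V x‖ ^ 2 := by
    ext y; rw [norm_gradient, hamiltonian]; ring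
  rw [h5]
  refine ((h1.pow 2).add ((h4.norm_sq).const_mul (4⁻¹ : ℝ))).congr_fderiv ?_
  ext y
  simp
  ring

lemma C2Bound.contDiff_hamiltonian (h : C2Bound C V) : ContDiff ℝ 1 (hamiltonian V) := by
  have h2 : ContDiff ℝ 1 (fderiv ℝ V) := h.contDiff.fderiv_right (by norm_num)
  have h4 : ContDiff ℝ 1 (gradient V) :=
    (rieszSymm d |>.contDiff).comp h2
  have h5 : hamiltonian V = fun x => V x ^ 2 + (4⁻¹ : ℝ) * ‖gradient V x‖ ^ 2 := by
    ext y; rw [norm_gradient, hamiltonian]; ring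
  rw [h5]
  exact ((h.contDiff.of_le (by norm_num)).pow 2).add (contDiff_const.mul (h4.norm_sq ℝ))

lemma C2Bound.norm_fderiv_hamiltonian_le (h : C2Bound C V) (x : Euc d) :
    ‖fderiv ℝ (hamiltonian V) x‖ ≤ 3 * C ^ 2 := by
  rw [(h.hasFDerivAt_hamiltonian x).fderiv]
  have hC := h.nonneg
  have h1 : ‖(2 * V x) • fderiv ℝ V x‖ ≤ 2 * C * C := by
    rw [norm_smul, Real.norm_eq_abs, abs_mul, abs_two]
    gcongr
    · exact h.bound x
    · exact h.bound_fderiv x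
  have h2 : ‖(2⁻¹ : ℝ) • (innerSL ℝ (gradient V x)).comp
      ((rieszSymm d).comp (fderiv ℝ (fderiv ℝ V) x))‖ ≤ 2⁻¹ * (C * C) := by
    rw [norm_smul]
    have e : ‖(2⁻¹ : ℝ)‖ = 2⁻¹ := by norm_num
    rw [e]
    gcongr
    refine (opNorm_comp_le _ _).trans ?_
    rw [innerSL_apply_norm, norm_gradient]
    gcongr
    · exact h.bound_fderiv x
    · refine opNorm_le_bound _ hC fun y => ?_
      rw [comp_apply]
      refine (norm_rieszSymm _).le.trans ?_
      exact le_of_opNorm_le _ (h.bound_fderiv₂ x) y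
  refine (norm_add_le _ _).trans ?_
  nlinarith

lemma C2Bound.taylor (h : C2Bound C V) (x y : Euc d) :
    V (x - y) ≤ V x - fderiv ℝ V x y + C * ‖y‖ ^ 2 := by
  have h2 : ContDiff ℝ 1 (fderiv ℝ V) := h.contDiff.fderiv_right (by norm_num)
  have h3 : ∀ z, ‖fderiv ℝ V z - fderiv ℝ V x‖ ≤ C * ‖z - x‖ := fun z =>
    convex_univ.norm_image_sub_le_of_norm_fderiv_le
      (fun w _ => h2.differentiable (by norm_num) w) (fun w _ => h.bound_fderiv₂ w)
      (mem_univ x) (mem_univ z)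
  have h4 := (convex_closedBall x ‖y‖).norm_image_sub_le_of_norm_fderiv_le' (f := V) (𝕜 := ℝ)
    (C := C * ‖y‖) (φ := fderiv ℝ V x) (x := x) (y := x - y)
    (fun w _ => h.contDiff.differentiable (by norm_num) w)
    (fun w hw => (h3 w).trans (by
      have := h.nonneg
      gcongr
      simpa [dist_eq_norm] using hw))
    (by simp) (by simp)
  have h5 := (abs_le.mp h4).2
  simp only [sub_sub_cancel_left, norm_neg, map_neg] at h5
  nlinarith

/-- One step of the dynamic programming inequality, expanded to first order: the optimal choice is
to move `x` by `-Δ ∇V / 2` and to scale the radius by `1 - Δ V`. -/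
lemma C2Bound.hamiltonJacobi_step (h : C2Bound C V) {V' : Euc d → ℝ} {Δ : ℝ} (hΔ : 0 < Δ)
    (hΔC : Δ * C ≤ 1)
    (hstep : ∀ x₀ x₁ : Euc d, ∀ r : ℝ, 0 ≤ r → V' x₁ ≤ r ^ 2 * V x₀ + coneSq x₀ r x₁ 1 / Δ)
    (x : Euc d) :
    V' x ≤ V x - Δ * hamiltonian V x + 3 * C ^ 3 * Δ ^ 2 := by
  have hC := h.nonneg
  have hv := h.bound x
  have hg := h.bound_fderiv x
  set v := V x with hvdef
  set n := ‖fderiv ℝ V x‖ with hn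
  have hn0 : 0 ≤ n := norm_nonneg _
  have hv1 : Δ * v ≤ 1 := (mul_le_mul_of_nonneg_left ((le_abs_self v).trans hv) hΔ.le).trans hΔC
  set y : Euc d := (Δ / 2) • gradient V x with hy
  have hyn : ‖y‖ = Δ / 2 * n := by
    rw [hy, norm_smul, norm_gradient, Real.norm_of_nonneg (by positivity)]
  have hT := h.taylor x y
  rw [hy, map_smul, fderiv_apply_gradient, ← hy, hyn, smul_eq_mul] at hT
  have hS := hstep (x - y) x (1 - Δ * v) (by linarith)
  have hcone : coneSq (x - y) (1 - Δ * v) x 1 / Δ ≤ Δ * v ^ 2 + Δ * (1 - Δ * v) * n ^ 2 / 4 := by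
    rw [div_le_iff₀ hΔ]
    have hd : dist x (x - y) = Δ / 2 * n := by rw [dist_eq_norm, sub_sub_cancel, hyn]
    have hc := one_sub_sq_le_cosPi (Δ / 2 * n)
    unfold coneSq
    rw [hd]
    have hr : 0 ≤ 1 - Δ * v := by linarith
    nlinarith [mul_le_mul_of_nonneg_left hc hr]
  have hr2 : (1 - Δ * v) ^ 2 * V (x - y) ≤
      (1 - Δ * v) ^ 2 * (v - Δ / 2 * n ^ 2 + C * (Δ / 2 * n) ^ 2) :=
    mul_le_mul_of_nonneg_left hT (sq_nonneg _)
  unfold hamiltonian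
  rw [← hvdef, ← hn]
  have hvv := abs_le.mp hv
  have hn2 : n ^ 2 ≤ C ^ 2 := pow_le_pow_left₀ hn0 hg 2
  have hv2 : v ^ 2 ≤ C ^ 2 := by rw [← sq_abs]; exact pow_le_pow_left₀ (abs_nonneg _) hv 2
  have hQ : V' x ≤ v - Δ * (v ^ 2 + n ^ 2 / 4) + Δ ^ 2 *
      (v ^ 2 * v + v * n ^ 2 * (3 / 4) - Δ * v ^ 2 * n ^ 2 / 2
        + (1 - Δ * v) ^ 2 * C * n ^ 2 / 4) := by
    refine (hS.trans (add_le_add hr2 hcone)).trans (le_of_eq ?_)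
    ring
  refine hQ.trans ?_
  rw [mul_comm _ (Δ ^ 2)]
  gcongr
  have t1 : v ^ 2 * v ≤ C ^ 3 := by
    calc v ^ 2 * v ≤ C ^ 2 * C := by
          exact (mul_le_mul_of_nonneg_left hvv.2 (sq_nonneg _)).trans
            (mul_le_mul_of_nonneg_right hv2 hC)
      _ = C ^ 3 := by ring
  have t2 : v * n ^ 2 ≤ C ^ 3 := by
    calc v * n ^ 2 ≤ C * C ^ 2 := (mul_le_mul_of_nonneg_right hvv.2 (sq_nonneg _)).trans
            (mul_le_mul_of_nonneg_left hn2 hC)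
      _ = C ^ 3 := by ring
  have t3 : 0 ≤ Δ * v ^ 2 * n ^ 2 := by positivity
  have t4 : (1 - Δ * v) ^ 2 * C * n ^ 2 ≤ 4 * C ^ 3 := by
    have : -1 ≤ Δ * v := by nlinarith
    have h4 : (1 - Δ * v) ^ 2 ≤ 4 := by nlinarith
    calc (1 - Δ * v) ^ 2 * C * n ^ 2 ≤ 4 * C * C ^ 2 := by gcongr
      _ = _ := by ring
  linarith [pow_nonneg hC 3]

end mollify

/-! ### Measurability of weakly continuous curves -/

section kernel
variable {d : ℕ}
open ProbabilityTheory Filter Topology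

/-- A weakly continuous curve of finite measures is the restriction to `[0,1]` of a finite
kernel. -/
lemma exists_kernel (μ : ℝ → Measure (Euc d)) (hfin : ∀ t ∈ Icc (0:ℝ) 1, IsFiniteMeasure (μ t))
    (hweakcont : ∀ φ : BoundedContinuousFunction (Euc d) ℝ,
      ContinuousOn (fun t => ∫ x, φ x ∂(μ t)) (Icc (0:ℝ) 1)) :
    ∃ κ : Kernel ℝ (Euc d), IsFiniteKernel κ ∧ ∀ t ∈ Icc (0:ℝ) 1, κ t = μ t := by
  classical
  let m : ℝ → Measure (Euc d) := fun t => if t ∈ Icc (0:ℝ) 1 then μ t else 0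
  have hm : ∀ t ∈ Icc (0:ℝ) 1, m t = μ t := fun t ht => if_pos ht
  have hm0 : ∀ t ∉ Icc (0:ℝ) 1, m t = 0 := fun t ht => if_neg ht
  have hmf : ∀ t, IsFiniteMeasure (m t) := fun t => by
    by_cases ht : t ∈ Icc (0:ℝ) 1
    · rw [hm t ht]; exact hfin t ht
    · rw [hm0 t ht]; infer_instance
  have hmeas : ∀ φ : BoundedContinuousFunction (Euc d) ℝ, Measurable fun t => ∫ x, φ x ∂(m t) := by
    intro φ
    have h := (hweakcont φ).measurable_piecewise (g := fun _ => (0:ℝ)) continuousOn_const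
      measurableSet_Icc
    convert h using 1
    ext t
    by_cases ht : t ∈ Icc (0:ℝ) 1
    · rw [piecewise_eq_of_mem _ _ _ ht, hm t ht]
    · rw [piecewise_eq_of_notMem _ _ _ ht, hm0 t ht, integral_zero_measure]
  have hclosed : ∀ F : Set (Euc d), IsClosed F → Measurable fun t => m t F := by
    intro F hF
    refine measurable_of_tendsto_metrizable (f := fun (n : ℕ) t =>
      ∫⁻ x, (hF.apprSeq n x : ℝ≥0∞) ∂(m t))
      (fun n => ?_) (tendsto_pi_nhds.mpr fun t => HasOuterApproxClosed.tendsto_lintegral_apprSeq hF (m t))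
    let φ : BoundedContinuousFunction (Euc d) ℝ := BoundedContinuousFunction.ofNormedAddCommGroup
      (fun x => (hF.apprSeq n x : ℝ)) (by fun_prop) 1 (fun x => by
        rw [Real.norm_of_nonneg (by positivity)]
        exact_mod_cast HasOuterApproxClosed.apprSeq_apply_le_one hF n x)
    have e : (fun t => ∫⁻ x, (hF.apprSeq n x : ℝ≥0∞) ∂(m t))
        = fun t => ENNReal.ofReal (∫ x, φ x ∂(m t)) := by
      ext t
      rw [ofReal_integral_eq_lintegral_ofReal (φ.integrable _)
        (Eventually.of_forall fun x => NNReal.coe_nonneg _)]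
      refine lintegral_congr fun x => ?_
      exact (ENNReal.ofReal_coe_nnreal).symm
    rw [e]
    exact (hmeas φ).ennreal_ofReal
  have hmm : Measurable m := Measurable.measure_of_isPiSystem
    (borel_eq_generateFrom_isClosed (α := Euc d) ▸ BorelSpace.measurable_eq)
    isPiSystem_isClosed hclosed (hclosed univ isClosed_univ)
  refine ⟨⟨m, hmm⟩, ?_, hm⟩
  obtain ⟨K, hK⟩ := isCompact_Icc.exists_bound_of_continuousOn
    (hweakcont (BoundedContinuousFunction.const _ 1))
  refine ⟨ENNReal.ofReal K, ENNReal.ofReal_lt_top, fun t => ?_⟩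
  change m t univ ≤ _
  by_cases ht : t ∈ Icc (0:ℝ) 1
  · have h1 := hK t ht
    have := hmf t
    rw [← hm t ht] at h1
    simp only [BoundedContinuousFunction.const_apply, integral_const, smul_eq_mul, mul_one] at h1
    rw [← ofReal_measureReal]
    exact ENNReal.ofReal_le_ofReal ((le_abs_self _).trans h1)
  · simp [hm0 t ht]

end kernel

/-! ### Solutions of the continuity equation with reaction -/

set_option linter.unusedSectionVars false

section flow
variable {d : ℕ}
open ProbabilityTheory Filter Topology

/-- A finite kernel on `ℝ^d`, weakly continuous over `[0,1]`, that solves the continuity equation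
with reaction driven by the fields `Ξ`, `ξ` of finite action. -/
structure ReactionFlow (κ : Kernel ℝ (Euc d)) (Ξ : ℝ → Euc d → Euc d) (ξ : ℝ → Euc d → ℝ) :
    Prop where
  measurable_velocity : Measurable (fun p : ℝ × Euc d => Ξ p.1 p.2)
  measurable_growth : Measurable (fun p : ℝ × Euc d => ξ p.1 p.2)
  weakCont : ∀ φ : BoundedContinuousFunction (Euc d) ℝ,
    ContinuousOn (fun t => ∫ x, φ x ∂(κ t)) (Icc (0:ℝ) 1)
  action_lt : ∫⁻ t in Icc (0:ℝ) 1,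
    ∫⁻ x, ENNReal.ofReal (‖Ξ t x‖^2 + 4 * (ξ t x)^2) ∂(κ t) < ⊤
  ce : ∀ φ : Euc d → ℝ, ContDiff ℝ 1 φ →
      ∀ ψ : ℝ → ℝ, ContDiff ℝ 1 ψ → HasCompactSupport ψ → tsupport ψ ⊆ Ioo (0:ℝ) 1 →
      ∫ t in (0:ℝ)..1,
        (deriv ψ t * ∫ x, φ x ∂(κ t)
          + ψ t * ∫ x, (fderiv ℝ φ x (Ξ t x) + 4 * ξ t x * φ x) ∂(κ t)) = 0

/-- The action `∫ |Ξ|² + 4 ξ²` at time `t`. -/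
noncomputable def action (κ : Kernel ℝ (Euc d)) (Ξ : ℝ → Euc d → Euc d) (ξ : ℝ → Euc d → ℝ)
    (t : ℝ) : ℝ := ∫ x, (‖Ξ t x‖ ^ 2 + 4 * (ξ t x) ^ 2) ∂(κ t)

/-- The rate of change of `∫ φ dκ t` prescribed by the continuity equation. -/
noncomputable def rate (κ : Kernel ℝ (Euc d)) (Ξ : ℝ → Euc d → Euc d) (ξ : ℝ → Euc d → ℝ)
    (φ : Euc d → ℝ) (t : ℝ) : ℝ := ∫ x, (fderiv ℝ φ x (Ξ t x) + 4 * ξ t x * φ x) ∂(κ t)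

/-- A common bound for a `C¹` function and its derivative. -/
structure C1Bound (K : ℝ) (φ : Euc d → ℝ) : Prop where
  contDiff : ContDiff ℝ 1 φ
  bound : ∀ x, |φ x| ≤ K
  bound_fderiv : ∀ x, ‖fderiv ℝ φ x‖ ≤ K

variable {κ : Kernel ℝ (Euc d)} [IsFiniteKernel κ] {Ξ : ℝ → Euc d → Euc d} {ξ : ℝ → Euc d → ℝ}
  {K : ℝ} {φ : Euc d → ℝ}

lemma C2Bound.toC1Bound (h : C2Bound K φ) : C1Bound K φ :=
  ⟨h.contDiff.of_le (by norm_num), h.bound, h.bound_fderiv⟩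

lemma C1Bound.neg (h : C1Bound K φ) : C1Bound K (-φ) where
  contDiff := h.contDiff.neg
  bound x := by simpa using h.bound x
  bound_fderiv x := by rw [fderiv_neg, norm_neg]; exact h.bound_fderiv x

lemma C2Bound.c1Bound_hamiltonian (h : C2Bound K φ) : C1Bound (3 * K ^ 2) (hamiltonian φ) where
  contDiff := h.contDiff_hamiltonian
  bound x := by
    rw [abs_of_nonneg (hamiltonian_nonneg _ _)]
    nlinarith [h.hamiltonian_le x, sq_nonneg K]
  bound_fderiv := h.norm_fderiv_hamiltonian_le

lemma C1Bound.nonneg (h : C1Bound K φ) : 0 ≤ K := (abs_nonneg _).trans (h.bound 0)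

lemma integrable_of_bound {α : Type*} [MeasurableSpace α] {μ : Measure α} [IsFiniteMeasure μ]
    {f : α → ℝ} (hf : Measurable f) {K : ℝ} (hK : ∀ x, |f x| ≤ K) : Integrable f μ :=
  Integrable.of_bound hf.aestronglyMeasurable K (Eventually.of_forall hK)

lemma C1Bound.integrable (h : C1Bound K φ) (μ : Measure (Euc d)) [IsFiniteMeasure μ] :
    Integrable φ μ := integrable_of_bound h.contDiff.continuous.measurable h.bound

lemma C1Bound.hamiltonian_le (h : C1Bound K φ) (x : Euc d) : hamiltonian φ x ≤ 2 * K ^ 2 := by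
  have h1 : φ x ^ 2 ≤ K ^ 2 := by
    rw [← sq_abs]; exact pow_le_pow_left₀ (abs_nonneg _) (h.bound x) 2
  have h2 : ‖fderiv ℝ φ x‖ ^ 2 ≤ K ^ 2 := pow_le_pow_left₀ (norm_nonneg _) (h.bound_fderiv x) 2
  unfold hamiltonian; nlinarith [sq_nonneg K]

lemma C1Bound.continuous_hamiltonian (h : C1Bound K φ) : Continuous (hamiltonian φ) := by
  have := h.contDiff.continuous
  have := h.contDiff.continuous_fderiv (by norm_num)
  unfold hamiltonian; fun_prop

lemma C1Bound.integrable_hamiltonian (h : C1Bound K φ) (μ : Measure (Euc d)) [IsFiniteMeasure μ] :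
    Integrable (hamiltonian φ) μ :=
  integrable_of_bound h.continuous_hamiltonian.measurable fun x => by
    rw [abs_of_nonneg (hamiltonian_nonneg _ _)]; exact h.hamiltonian_le x

lemma C1Bound.integral_hamiltonian_le (h : C1Bound K φ) (t : ℝ) :
    ∫ x, hamiltonian φ x ∂(κ t) ≤ 2 * K ^ 2 * (Kernel.bound κ).toReal := by
  calc ∫ x, hamiltonian φ x ∂(κ t) ≤ ∫ _x, 2 * K ^ 2 ∂(κ t) :=
        integral_mono (h.integrable_hamiltonian _) (integrable_const _) h.hamiltonian_le
    _ = (κ t).real univ * (2 * K ^ 2) := by simp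
    _ ≤ (Kernel.bound κ).toReal * (2 * K ^ 2) := by
        gcongr
        exact ENNReal.toReal_mono (Kernel.bound_ne_top κ) (Kernel.measure_le_bound κ t univ)
    _ = _ := by ring

lemma fderiv_apply_eq_inner (φ : Euc d → ℝ) (x v : Euc d) :
    fderiv ℝ φ x v = inner ℝ (gradient φ x) v :=
  (InnerProductSpace.toDual_symm_apply (𝕜 := ℝ) (E := Euc d)).symm

namespace ReactionFlow

section
variable (hF : ReactionFlow κ Ξ ξ)
include hF

lemma measurable_action_density :
    Measurable (fun p : ℝ × Euc d => ‖Ξ p.1 p.2‖ ^ 2 + 4 * (ξ p.1 p.2) ^ 2) := by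
  have := hF.measurable_velocity
  have := hF.measurable_growth
  fun_prop

lemma measurable_rate_density (h : C1Bound K φ) :
    Measurable (fun p : ℝ × Euc d => fderiv ℝ φ p.2 (Ξ p.1 p.2) + 4 * ξ p.1 p.2 * φ p.2) := by
  have h1 := hF.measurable_velocity
  have h2 := hF.measurable_growth
  have h3 : Measurable φ := h.contDiff.continuous.measurable
  have h4 : Measurable (gradient φ) := ((rieszSymm d).continuous.comp
    (h.contDiff.continuous_fderiv (by norm_num))).measurable
  simp_rw [fderiv_apply_eq_inner]
  fun_prop

lemma ae_integrable : ∀ᵐ t ∂(volume.restrict (Icc (0:ℝ) 1)),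
    Integrable (fun x => ‖Ξ t x‖ ^ 2 + 4 * (ξ t x) ^ 2) (κ t) := by
  have hm := hF.measurable_action_density
  have h1 : Measurable fun t => ∫⁻ x, ENNReal.ofReal (‖Ξ t x‖^2 + 4 * (ξ t x)^2) ∂(κ t) :=
    hm.ennreal_ofReal.lintegral_kernel_prod_right'
  filter_upwards [ae_lt_top h1 hF.action_lt.ne] with t ht
  refine ⟨(hm.comp measurable_prodMk_left).aestronglyMeasurable, ?_⟩
  rw [hasFiniteIntegral_iff_ofReal (Eventually.of_forall fun x => by positivity)]
  exact ht

lemma integrableOn_action : IntegrableOn (action κ Ξ ξ) (Icc (0:ℝ) 1) := by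
  have hm := hF.measurable_action_density
  have h1 : Measurable fun t => ∫⁻ x, ENNReal.ofReal (‖Ξ t x‖^2 + 4 * (ξ t x)^2) ∂(κ t) :=
    hm.ennreal_ofReal.lintegral_kernel_prod_right'
  refine (integrable_toReal_of_lintegral_ne_top h1.aemeasurable hF.action_lt.ne).congr ?_
  refine Eventually.of_forall fun t => ?_
  have h0 : 0 ≤ᵐ[κ t] fun x => ‖Ξ t x‖ ^ 2 + 4 * (ξ t x) ^ 2 :=
    Eventually.of_forall fun x => show (0:ℝ) ≤ _ by positivity
  exact (integral_eq_lintegral_of_nonneg_ae h0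
    (hm.comp measurable_prodMk_left).aestronglyMeasurable).symm

end

lemma action_nonneg (t : ℝ) : 0 ≤ action κ Ξ ξ t := integral_nonneg fun x => by positivity

section
variable (hF : ReactionFlow κ Ξ ξ)
include hF

lemma integrableOn_speed : IntegrableOn (fun t => √(action κ Ξ ξ t)) (Icc (0:ℝ) 1) := by
  refine Integrable.mono' ((integrable_const (1:ℝ)).add hF.integrableOn_action)
    (Real.continuous_sqrt.comp_aestronglyMeasurable hF.integrableOn_action.aestronglyMeasurable) ?_
  refine Eventually.of_forall fun t => ?_
  rw [Real.norm_of_nonneg (Real.sqrt_nonneg _)]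
  have h := Real.sq_sqrt (action_nonneg (κ := κ) (Ξ := Ξ) (ξ := ξ) t)
  simp only [Pi.add_apply]
  nlinarith [sq_nonneg (√(action κ Ξ ξ t) - 1)]

lemma intervalIntegrable_speed {a b : ℝ} (ha : 0 ≤ a) (hab : a ≤ b) (hb : b ≤ 1) :
    IntervalIntegrable (fun t => √(action κ Ξ ξ t)) volume a b := by
  rw [intervalIntegrable_iff_integrableOn_Icc_of_le hab]
  exact hF.integrableOn_speed.mono_set (Icc_subset_Icc ha hb)

/-- Young's inequality against the Hamiltonian: the action density is dual to `hamiltonian φ`. -/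
lemma rate_le_of_integrable (h : C1Bound K φ) {t : ℝ}
    (ht : Integrable (fun x => ‖Ξ t x‖ ^ 2 + 4 * (ξ t x) ^ 2) (κ t)) {c : ℝ} (hc : 0 < c) :
    rate κ Ξ ξ φ t ≤ action κ Ξ ξ t / c + c * ∫ x, hamiltonian φ x ∂(κ t) := by
  have hy : ∀ x, |fderiv ℝ φ x (Ξ t x) + 4 * ξ t x * φ x|
      ≤ (‖Ξ t x‖ ^ 2 + 4 * (ξ t x) ^ 2) / c + c * hamiltonian φ x := by
    intro x
    have h1 : |fderiv ℝ φ x (Ξ t x)| ≤ ‖fderiv ℝ φ x‖ * ‖Ξ t x‖ := (fderiv ℝ φ x).le_opNorm _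
    have h2 : |4 * ξ t x * φ x| = 4 * (|ξ t x| * |φ x|) := by
      rw [abs_mul, abs_mul]; norm_num; ring
    have h3 : ‖fderiv ℝ φ x‖ * ‖Ξ t x‖ ≤ ‖Ξ t x‖ ^ 2 / c + c * (‖fderiv ℝ φ x‖ ^ 2 / 4) := by
      have : ‖Ξ t x‖ ^ 2 / c + c * (‖fderiv ℝ φ x‖ ^ 2 / 4) - ‖fderiv ℝ φ x‖ * ‖Ξ t x‖
        = (‖Ξ t x‖ - c * ‖fderiv ℝ φ x‖ / 2) ^ 2 / c := by field_simp; ring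
      have : 0 ≤ (‖Ξ t x‖ - c * ‖fderiv ℝ φ x‖ / 2) ^ 2 / c := by positivity
      linarith
    have h4 : 4 * (|ξ t x| * |φ x|) ≤ 4 * (ξ t x) ^ 2 / c + c * φ x ^ 2 := by
      have : 4 * |ξ t x| ^ 2 / c + c * |φ x| ^ 2 - 4 * (|ξ t x| * |φ x|)
        = (2 * |ξ t x| - c * |φ x|) ^ 2 / c := by field_simp; ring
      have : 0 ≤ (2 * |ξ t x| - c * |φ x|) ^ 2 / c := by positivity
      rw [← sq_abs (ξ t x), ← sq_abs (φ x)]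
      linarith
    refine (abs_add_le _ _).trans ?_
    rw [h2]
    unfold hamiltonian
    rw [add_div]
    linarith
  have hi : Integrable (fun x => (‖Ξ t x‖ ^ 2 + 4 * (ξ t x) ^ 2) / c + c * hamiltonian φ x) (κ t) :=
    (ht.div_const c).add ((h.integrable_hamiltonian _).const_mul c)
  have hi2 : Integrable (fun x => fderiv ℝ φ x (Ξ t x) + 4 * ξ t x * φ x) (κ t) :=
    hi.mono' ((hF.measurable_rate_density h).comp measurable_prodMk_left).aestronglyMeasurable
      (Eventually.of_forall hy)
  calc rate κ Ξ ξ φ t ≤ ∫ x, ((‖Ξ t x‖ ^ 2 + 4 * (ξ t x) ^ 2) / c + c * hamiltonian φ x) ∂(κ t) :=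
        integral_mono hi2 hi fun x => (le_abs_self _).trans (hy x)
    _ = _ := by
        rw [integral_add (ht.div_const c) ((h.integrable_hamiltonian _).const_mul c),
          integral_div, integral_const_mul]
        rfl

/-- Young's inequality with the weight chosen according to the speed `√action`. -/
lemma rate_le (h : C1Bound K φ) {t : ℝ}
    (ht : Integrable (fun x => ‖Ξ t x‖ ^ 2 + 4 * (ξ t x) ^ 2) (κ t)) {L : ℝ} (hL : 0 < L) :
    rate κ Ξ ξ φ t ≤ √(action κ Ξ ξ t) * (L + (∫ x, hamiltonian φ x ∂(κ t)) / L) := by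
  set A := action κ Ξ ξ t with hA
  set H := ∫ x, hamiltonian φ x ∂(κ t)
  have hA0 : 0 ≤ A := action_nonneg t
  have hY : ∀ c : ℝ, 0 < c → rate κ Ξ ξ φ t ≤ A / c + c * H := fun c hc =>
    hF.rate_le_of_integrable h ht hc
  rcases hA0.eq_or_lt with h0 | hpos
  · rw [← h0, Real.sqrt_zero, zero_mul]
    have hH : 0 ≤ H := integral_nonneg (hamiltonian_nonneg φ)
    refine le_of_forall_pos_le_add fun ε hε => ?_
    refine (hY (ε / (H + 1)) (by positivity)).trans ?_
    rw [← h0, zero_div, zero_add, zero_add, div_mul_eq_mul_div, div_le_iff₀ (by positivity)]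
    nlinarith
  · have hs : 0 < √A := Real.sqrt_pos.mpr hpos
    refine (hY (√A / L) (by positivity)).trans (le_of_eq ?_)
    have : A = √A * √A := (Real.mul_self_sqrt hA0).symm
    field_simp
    nlinarith

omit hF in
lemma rate_neg (t : ℝ) : rate κ Ξ ξ (-φ) t = -rate κ Ξ ξ φ t := by
  unfold rate
  rw [← integral_neg]
  congr 1
  ext x
  simp [fderiv_neg]
  ring

/-- The rate of change of a `C¹` observable is controlled by the speed. -/
lemma ae_abs_rate_le (h : C1Bound K φ) : ∀ᵐ t ∂(volume.restrict (Icc (0:ℝ) 1)),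
    |rate κ Ξ ξ φ t| ≤ (1 + 2 * K ^ 2 * (Kernel.bound κ).toReal) * √(action κ Ξ ξ t) := by
  filter_upwards [hF.ae_integrable] with t ht
  have key : ∀ φ : Euc d → ℝ, C1Bound K φ → rate κ Ξ ξ φ t ≤
      (1 + 2 * K ^ 2 * (Kernel.bound κ).toReal) * √(action κ Ξ ξ t) := fun φ h => by
    refine (hF.rate_le h ht one_pos).trans ?_
    rw [mul_comm, div_one]
    gcongr
    exact h.integral_hamiltonian_le t
  refine abs_le'.mpr ⟨key φ h, ?_⟩
  rw [← rate_neg]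
  exact key _ h.neg

lemma integrableOn_rate (h : C1Bound K φ) : IntegrableOn (rate κ Ξ ξ φ) (Icc (0:ℝ) 1) := by
  refine Integrable.mono' (hF.integrableOn_speed.const_mul _) ?_ (hF.ae_abs_rate_le h)
  exact ((hF.measurable_rate_density h).stronglyMeasurable.integral_kernel_prod_right'
    (κ := κ)).aestronglyMeasurable

lemma intervalIntegrable_rate (h : C1Bound K φ) {a b : ℝ} (ha : 0 ≤ a) (hab : a ≤ b)
    (hb : b ≤ 1) : IntervalIntegrable (rate κ Ξ ξ φ) volume a b := by
  rw [intervalIntegrable_iff_integrableOn_Icc_of_le hab]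
  exact (hF.integrableOn_rate h).mono_set (Icc_subset_Icc ha hb)

end
end ReactionFlow
end flow

/-! ### The continuity equation in integrated form -/

section dubois
open Filter Topology
open scoped ContDiff

/-- The du Bois-Reymond lemma: a continuous function with vanishing distributional derivative is
constant. -/
lemma eq_of_integral_deriv_mul_eq_zero {u : ℝ → ℝ} (hu : ContinuousOn u (Icc (0:ℝ) 1))
    (h : ∀ ψ : ℝ → ℝ, ContDiff ℝ 1 ψ → HasCompactSupport ψ → tsupport ψ ⊆ Ioo (0:ℝ) 1 →
      ∫ t in (0:ℝ)..1, deriv ψ t * u t = 0) {a b : ℝ} (ha : a ∈ Icc (0:ℝ) 1)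
    (hb : b ∈ Icc (0:ℝ) 1) : u a = u b := by
  -- a reference density, used to correct test functions so that they have mean zero
  let B : ContDiffBump (1 / 2 : ℝ) := ⟨1 / 8, 1 / 4, by norm_num, by norm_num⟩
  set χ₀ : ℝ → ℝ := B.normed volume with hχ₀
  have hχ₀s : tsupport χ₀ ⊆ Ioo (0:ℝ) 1 := by
    rw [hχ₀, B.tsupport_normed_eq, Real.closedBall_eq_Icc]
    exact Icc_subset_Ioo (by norm_num [B]) (by norm_num [B])
  have hχ₀c : ContDiff ℝ ∞ χ₀ := B.contDiff_normed
  have hu' : ∀ {f : ℝ → ℝ}, Continuous f →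
      IntervalIntegrable (fun t => f t * u t) volume 0 1 := fun hf =>
    ContinuousOn.intervalIntegrable_of_Icc zero_le_one (hf.continuousOn.mul hu)
  have hsupp : ∀ {f : ℝ → ℝ}, tsupport f ⊆ Ioo (0:ℝ) 1 → Function.support f ⊆ Ioc (0:ℝ) 1 :=
    fun hf => (subset_tsupport _).trans (hf.trans Ioo_subset_Ioc_self)
  set c := ∫ t in (0:ℝ)..1, χ₀ t * u t with hc
  have key : ∀ᵐ t, t ∈ Ioo (0:ℝ) 1 → u t - c = 0 := by
    refine isOpen_Ioo.ae_eq_zero_of_integral_contDiff_smul_eq_zero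
      (((hu.sub continuousOn_const).mono Ioo_subset_Icc_self).locallyIntegrableOn
        measurableSet_Ioo) ?_
    intro χ hχ hχc hχs
    set m := ∫ t, χ t with hm
    set f : ℝ → ℝ := fun t => χ t - m * χ₀ t with hf
    have hfc : Continuous f := hχ.continuous.sub (continuous_const.mul hχ₀c.continuous)
    set S := tsupport χ ∪ tsupport χ₀ with hS
    have hScpt : IsCompact S := hχc.isCompact.union B.hasCompactSupport_normed.isCompact
    have hSne : S.Nonempty := by
      refine ⟨1 / 2, Or.inr ?_⟩
      rw [hχ₀, B.tsupport_normed_eq]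
      exact Metric.mem_closedBall_self (by norm_num [B])
    have hSI : S ⊆ Ioo (0:ℝ) 1 := union_subset hχs hχ₀s
    have hα := hSI (hScpt.sInf_mem hSne)
    have hβ := hSI (hScpt.sSup_mem hSne)
    have hf0 : ∀ t ∉ S, f t = 0 := fun t ht => by
      rw [hS, mem_union, not_or] at ht
      simp [hf, image_eq_zero_of_notMem_tsupport ht.1, image_eq_zero_of_notMem_tsupport ht.2]
    have hfI : ∫ t in (0:ℝ)..1, f t = 0 := by
      rw [intervalIntegral.integral_eq_integral_of_support_subset, hf,
        integral_sub (hχ.continuous.integrable_of_hasCompactSupport hχc)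
          (B.integrable_normed.const_mul m), integral_const_mul, B.integral_normed, ← hm]
      · ring
      · intro t ht
        by_contra h0
        exact ht (hf0 t fun hS => h0 (Ioo_subset_Ioc_self (hSI hS)))
    set ψ : ℝ → ℝ := fun t => ∫ r in (0:ℝ)..t, f r with hψ
    have hψd : ∀ t, HasDerivAt ψ (f t) t := fun t =>
      intervalIntegral.integral_hasDerivAt_right (hfc.intervalIntegrable _ _)
        hfc.stronglyMeasurable.stronglyMeasurableAtFilter hfc.continuousAt
    have hψ0 : ∀ t ∉ Icc (sInf S) (sSup S), ψ t = 0 := by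
      intro t ht
      by_cases h1 : sInf S ≤ t
      · have h2 : sSup S < t := not_le.mp fun h2 => ht ⟨h1, h2⟩
        have : ψ t = (∫ r in (0:ℝ)..1, f r) + ∫ r in (1:ℝ)..t, f r :=
          (intervalIntegral.integral_add_adjacent_intervals (hfc.intervalIntegrable _ _)
            (hfc.intervalIntegrable _ _)).symm
        rw [this, hfI, zero_add]
        rw [intervalIntegral.integral_congr (g := fun _ => (0:ℝ)), intervalIntegral.integral_zero]
        intro r hr
        refine hf0 r fun hrS => ?_
        have h3 := le_csSup hScpt.bddAbove hrS
        have h4 : min 1 t ≤ r := hr.1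
        rcases min_le_iff.mp h4 with h5 | h5 <;> linarith [hβ.2]
      · rw [not_le] at h1
        rw [hψ]
        dsimp only
        rw [intervalIntegral.integral_congr (g := fun _ => (0:ℝ)), intervalIntegral.integral_zero]
        intro r hr
        refine hf0 r fun hrS => ?_
        have h3 := csInf_le hScpt.bddBelow hrS
        have h4 : r ≤ max 0 t := hr.2
        rcases le_max_iff.mp h4 with h5 | h5 <;> linarith [hα.1]
    have hψS : tsupport ψ ⊆ Icc (sInf S) (sSup S) :=
      closure_minimal (fun t ht => by_contra fun h0 => ht (hψ0 t h0)) isClosed_Icc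
    have hψder : deriv ψ = f := funext fun t => (hψd t).deriv
    have hψC : ContDiff ℝ 1 ψ := by
      rw [contDiff_one_iff_deriv, hψder]
      exact ⟨fun t => (hψd t).differentiableAt, hfc⟩
    have h0 := h ψ hψC (HasCompactSupport.of_support_subset_isCompact isCompact_Icc
      ((subset_tsupport _).trans hψS)) (hψS.trans (Icc_subset_Ioo hα.1 hβ.2))
    rw [hψder] at h0
    have h1 : ∫ t in (0:ℝ)..1, χ t * u t = m * c := by
      have : ∀ t, f t * u t = χ t * u t - m * (χ₀ t * u t) := fun t => by simp only [hf]; ring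
      simp_rw [this] at h0
      rw [intervalIntegral.integral_sub (hu' hχ.continuous) ((hu' hχ₀c.continuous).const_mul m),
        intervalIntegral.integral_const_mul] at h0
      linarith
    have hm' : ∫ t in (0:ℝ)..1, χ t = m :=
      intervalIntegral.integral_eq_integral_of_support_subset (hsupp hχs)
    rw [← intervalIntegral.integral_eq_integral_of_support_subset (a := 0) (b := 1)]
    · have : ∀ t, χ t • (u t - c) = χ t * u t - c * χ t := fun t => by rw [smul_eq_mul]; ring
      simp_rw [this]
      rw [intervalIntegral.integral_sub (hu' hχ.continuous)
        ((hχ.continuous.intervalIntegrable _ _).const_mul c), h1,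
        intervalIntegral.integral_const_mul, hm']
      ring
    · intro t ht
      refine hsupp hχs fun h0 => ht ?_
      simp [h0]
  have hconst : EqOn u (fun _ => c) (Icc (0:ℝ) 1) := by
    refine Measure.eqOn_Icc_of_ae_eq volume zero_ne_one ?_ hu continuousOn_const
    rw [← restrict_Ioo_eq_restrict_Icc]
    filter_upwards [ae_restrict_mem measurableSet_Ioo, ae_restrict_of_ae key] with t h1 h2
    linarith [h2 h1]
  rw [hconst ha, hconst hb]

end dubois

section ce
variable {d : ℕ}
open ProbabilityTheory Filter Topology
variable {κ : Kernel ℝ (Euc d)} [IsFiniteKernel κ] {Ξ : ℝ → Euc d → Euc d} {ξ : ℝ → Euc d → ℝ}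
  {K : ℝ} {φ : Euc d → ℝ}

/-- The continuity equation in integrated form. -/
lemma ReactionFlow.integral_sub_integral (hF : ReactionFlow κ Ξ ξ) (h : C1Bound K φ) {a b : ℝ}
    (ha : 0 ≤ a) (hab : a ≤ b) (hb : b ≤ 1) :
    ∫ x, φ x ∂(κ b) - ∫ x, φ x ∂(κ a) = ∫ t in a..b, rate κ Ξ ξ φ t := by
  have hr01 := hF.intervalIntegrable_rate h le_rfl zero_le_one le_rfl
  set m : ℝ → ℝ := fun t => ∫ x, φ x ∂(κ t) with hm
  set G : ℝ → ℝ := fun t => ∫ r in (0:ℝ)..t, rate κ Ξ ξ φ r with hG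
  have hmc : ContinuousOn m (Icc (0:ℝ) 1) :=
    hF.weakCont (BoundedContinuousFunction.ofNormedAddCommGroup φ h.contDiff.continuous K h.bound)
  have hGac : AbsolutelyContinuousOnInterval G 0 1 :=
    hr01.absolutelyContinuousOnInterval_intervalIntegral (by simp)
  have hGc : ContinuousOn G (Icc (0:ℝ) 1) := by
    have := hGac.continuousOn
    rwa [uIcc_of_le zero_le_one] at this
  have hconst := eq_of_integral_deriv_mul_eq_zero (u := fun t => m t - G t) (hmc.sub hGc)
    (fun ψ hψ hψc hψs => by
      have hψ' : Continuous (deriv ψ) := hψ.continuous_deriv (by norm_num)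
      have h1 := hF.ce φ h.contDiff ψ hψ hψc hψs
      have e0 : ψ 0 = 0 := image_eq_zero_of_notMem_tsupport fun h0 => (hψs h0).1.false
      have e1 : ψ 1 = 0 := image_eq_zero_of_notMem_tsupport fun h0 => (hψs h0).2.false
      have h2 := AbsolutelyContinuousOnInterval.integral_mul_deriv_eq_deriv_mul
        (hψ.contDiffOn.absolutelyContinuousOnInterval (a := 0) (b := 1)) hGac
      rw [e0, e1, zero_mul, zero_mul, sub_zero, zero_sub] at h2
      have h3 : ∫ t in (0:ℝ)..1, ψ t * deriv G t = ∫ t in (0:ℝ)..1, ψ t * rate κ Ξ ξ φ t := by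
        refine intervalIntegral.integral_congr_ae ?_
        filter_upwards [hr01.ae_hasDerivAt_integral] with t ht ht'
        rw [(ht (uIoc_subset_uIcc ht') 0 (by simp)).deriv]
      have i1 : IntervalIntegrable (fun t => deriv ψ t * m t) volume 0 1 :=
        ContinuousOn.intervalIntegrable_of_Icc zero_le_one (hψ'.continuousOn.mul hmc)
      have i2 : IntervalIntegrable (fun t => deriv ψ t * G t) volume 0 1 :=
        ContinuousOn.intervalIntegrable_of_Icc zero_le_one (hψ'.continuousOn.mul hGc)
      have i3 : IntervalIntegrable (fun t => ψ t * rate κ Ξ ξ φ t) volume 0 1 :=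
        hr01.continuousOn_mul hψ.continuous.continuousOn
      have h4 : (∫ t in (0:ℝ)..1, deriv ψ t * m t) + ∫ t in (0:ℝ)..1, ψ t * rate κ Ξ ξ φ t = 0 := by
        rw [← intervalIntegral.integral_add i1 i3]
        exact h1
      simp_rw [mul_sub]
      rw [intervalIntegral.integral_sub i1 i2]
      linarith)
    (a := a) (b := b) ⟨ha, hab.trans hb⟩ ⟨ha.trans hab, hb⟩
  have hadd := intervalIntegral.integral_add_adjacent_intervals
    (hF.intervalIntegrable_rate h le_rfl ha (hab.trans hb)) (hF.intervalIntegrable_rate h ha hab hb)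
  simp only [hm, hG] at hconst
  linarith

end ce

/-! ### One short step and summation over steps -/

section step
variable {d : ℕ}
open ProbabilityTheory Filter Topology
variable {κ : Kernel ℝ (Euc d)} [IsFiniteKernel κ] {Ξ : ℝ → Euc d → Euc d} {ξ : ℝ → Euc d → ℝ}
  {K : ℝ} {φ : Euc d → ℝ}

lemma ReactionFlow.abs_integral_sub_le (hF : ReactionFlow κ Ξ ξ) (h : C1Bound K φ) {a b : ℝ}
    (ha : 0 ≤ a) (hab : a ≤ b) (hb : b ≤ 1) :
    |∫ x, φ x ∂(κ b) - ∫ x, φ x ∂(κ a)| ≤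
      (1 + 2 * K ^ 2 * (Kernel.bound κ).toReal) * ∫ t in a..b, √(action κ Ξ ξ t) := by
  rw [hF.integral_sub_integral h ha hab hb, ← intervalIntegral.integral_const_mul]
  rw [← Real.norm_eq_abs]
  refine intervalIntegral.norm_integral_le_of_norm_le hab ?_
    ((hF.intervalIntegrable_speed ha hab hb).const_mul _)
  have := (ae_restrict_iff' measurableSet_Icc).mp (hF.ae_abs_rate_le h)
  filter_upwards [this] with t ht ht'
  exact ht ⟨ha.trans ht'.1.le, ht'.2.trans hb⟩

/-- Dual estimate over one short time step: a function `V'` obtained from `V` by an approximate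
Hamilton–Jacobi step of size `Δ` is tested against a piece of the flow of length at most `L Δ`. -/
lemma ReactionFlow.step (hF : ReactionFlow κ Ξ ξ) {C c L Δ : ℝ} {V V' : Euc d → ℝ}
    (hV : C2Bound C V) (hV' : C2Bound C V') (hc : 0 ≤ c) (hL : 0 < L) (hΔ : 0 < Δ)
    (hHJ : ∀ x, V' x ≤ V x - Δ * hamiltonian V x + c * Δ ^ 2) {a b : ℝ}
    (ha : 0 ≤ a) (hab : a ≤ b) (hb : b ≤ 1) (hlen : ∫ t in a..b, √(action κ Ξ ξ t) ≤ L * Δ) :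
    ∫ x, V' x ∂(κ b) - ∫ x, V x ∂(κ a) ≤ L * (∫ t in a..b, √(action κ Ξ ξ t)) +
      (c * (Kernel.bound κ).toReal +
        (1 + 2 * (3 * C ^ 2) ^ 2 * (Kernel.bound κ).toReal) * L) * Δ ^ 2 := by
  set M := (Kernel.bound κ).toReal with hM
  set D := 1 + 2 * (3 * C ^ 2) ^ 2 * M with hD
  have hD0 : 0 ≤ D := by positivity
  set Λ := ∫ t in a..b, √(action κ Ξ ξ t) with hΛ
  have hΛ0 : 0 ≤ Λ := intervalIntegral.integral_nonneg hab fun t _ => Real.sqrt_nonneg _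
  have hV1 := hV.toC1Bound
  have hS := hF.intervalIntegrable_speed ha hab hb
  set h : ℝ → ℝ := fun t => ∫ x, hamiltonian V x ∂(κ t) with hh
  have h1 : ∫ x, V' x ∂(κ b) ≤ ∫ x, V x ∂(κ b) - Δ * h b + c * M * Δ ^ 2 := by
    have i1 := hV1.integrable (κ b)
    have i2 := hV1.integrable_hamiltonian (κ b)
    have i3 : Integrable (fun x => V x - Δ * hamiltonian V x) (κ b) := i1.sub (i2.const_mul Δ)
    calc ∫ x, V' x ∂(κ b) ≤ ∫ x, (V x - Δ * hamiltonian V x + c * Δ ^ 2) ∂(κ b) :=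
          integral_mono (hV'.toC1Bound.integrable _)
            (i3.add (integrable_const _)) hHJ
      _ = ∫ x, V x ∂(κ b) - Δ * h b + (κ b).real univ * (c * Δ ^ 2) := by
          rw [integral_add i3 (integrable_const _),
            integral_sub i1 (i2.const_mul Δ), integral_const_mul, integral_const, smul_eq_mul]
      _ ≤ ∫ x, V x ∂(κ b) - Δ * h b + M * (c * Δ ^ 2) := by
          gcongr
          exact ENNReal.toReal_mono (Kernel.bound_ne_top κ) (Kernel.measure_le_bound κ b univ)
      _ = _ := by ring
  have hr : ∀ t ∈ Icc a b, h t ≤ h b + D * (L * Δ) := by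
    intro t ht
    have h2 := hF.abs_integral_sub_le hV.c1Bound_hamiltonian (ha.trans ht.1) ht.2 hb
    have h3 : ∫ r in t..b, √(action κ Ξ ξ r) ≤ Λ := by
      refine intervalIntegral.integral_mono_interval ht.1 ht.2 le_rfl
        (Eventually.of_forall fun t => Real.sqrt_nonneg _) hS
    have h4 := (abs_le.mp h2).1
    have h5 : D * ∫ r in t..b, √(action κ Ξ ξ r) ≤ D * (L * Δ) := by
      gcongr
      exact h3.trans hlen
    simp only [hh]
    linarith
  have h2 : ∫ x, V x ∂(κ b) - ∫ x, V x ∂(κ a) ≤ Λ * (L + (h b + D * (L * Δ)) / L) := by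
    rw [hF.integral_sub_integral hV1 ha hab hb, hΛ, ← intervalIntegral.integral_mul_const]
    refine intervalIntegral.integral_mono_ae_restrict hab (hF.intervalIntegrable_rate hV1 ha hab hb)
      (hS.mul_const _) ?_
    filter_upwards [ae_restrict_of_ae_restrict_of_subset (Icc_subset_Icc ha hb) hF.ae_integrable,
      ae_restrict_mem measurableSet_Icc] with t ht ht'
    refine (hF.rate_le hV1 ht hL).trans ?_
    gcongr
    exact hr t ht'
  have h3 : Λ * ((h b + D * (L * Δ)) / L) ≤ Δ * (h b + D * (L * Δ)) := by
    have hb0 : 0 ≤ h b := integral_nonneg (hamiltonian_nonneg V)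
    rw [mul_div_assoc', div_le_iff₀ hL]
    nlinarith [mul_le_mul_of_nonneg_right hlen (by positivity : 0 ≤ h b + D * (L * Δ))]
  nlinarith

/-- Summation of one-step estimates along a subdivision of `[a, t]` adapted to the density `S`. -/
lemma chain_le {S : ℝ → ℝ} (hS0 : ∀ t, 0 ≤ S t) (hS : IntegrableOn S (Icc (0:ℝ) 1))
    {T : ℕ → ℝ → ℝ} {N : ℕ} {ℓ L e : ℝ} (hℓ : 0 ≤ ℓ)
    (hstep : ∀ i < N, ∀ a b : ℝ, 0 ≤ a → a ≤ b → b ≤ 1 → ∫ t in a..b, S t ≤ ℓ →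
      T (i + 1) b - T i a ≤ L * (∫ t in a..b, S t) + e) {t : ℝ} (ht : t ≤ 1) (k : ℕ) :
    ∀ i : ℕ, i + (k + 1) ≤ N → ∀ a : ℝ, 0 ≤ a → a ≤ t → ∫ r in a..t, S r ≤ (k + 1) * ℓ →
      T (i + (k + 1)) t - T i a ≤ L * (∫ r in a..t, S r) + (k + 1) * e := by
  have hintg : ∀ {a b : ℝ}, 0 ≤ a → a ≤ b → b ≤ 1 → IntervalIntegrable S volume a b :=
    fun ha hab hb => by
      rw [intervalIntegrable_iff_integrableOn_Icc_of_le hab]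
      exact hS.mono_set (Icc_subset_Icc ha hb)
  induction k with
  | zero =>
    intro i hi a ha hat hlen
    have := hstep i hi a t ha hat ht (by simpa using hlen)
    simpa using this
  | succ k ih =>
    intro i hi a ha hat hlen
    push_cast at hlen ⊢
    -- the first piece has length `ℓ`, or exhausts `[a, t]`
    have hcont : ContinuousOn (fun b => ∫ r in a..b, S r) (Icc a t) := by
      have := intervalIntegral.continuousOn_primitive_interval'
        (hintg ha hat ht) left_mem_uIcc
      rwa [uIcc_of_le hat] at this
    have hΛ0 : 0 ≤ ∫ r in a..t, S r := intervalIntegral.integral_nonneg hat fun r _ => hS0 r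
    obtain ⟨b, hb, hbe⟩ := intermediate_value_Icc hat hcont
      (show min ℓ (∫ r in a..t, S r) ∈ _ from
        ⟨by simpa using ⟨hℓ, hΛ0⟩, min_le_right _ _⟩)
    dsimp only at hbe
    have hadd := intervalIntegral.integral_add_adjacent_intervals
      (hintg ha hb.1 (hb.2.trans ht)) (hintg (ha.trans hb.1) hb.2 ht)
    have h1 := hstep i (by omega) a b ha hb.1 (hb.2.trans ht) (hbe.le.trans (min_le_left _ _))
    have h2 := ih (i + 1) (by omega) b (ha.trans hb.1) hb.2 (by
      rcases min_choice ℓ (∫ r in a..t, S r) with h | h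
      · rw [h] at hbe; linarith
      · rw [h] at hbe
        have : (0:ℝ) ≤ (k + 1) * ℓ := by positivity
        linarith)
    have e1 : i + 1 + (k + 1) = i + (k + 1 + 1) := by ring
    rw [e1] at h2
    rw [← hadd]
    linarith

end step

/-! ### The bound on the Hellinger–Kantorovich distance -/

section mollifiedHopfLax
variable {d : ℕ}
open ProbabilityTheory Filter Topology
open scoped Convolution ContDiff

/-- Mollification of `u` by the normalised bump `η`. -/
noncomputable def mollify (η : ContDiffBump (0 : Euc d)) (u : Euc d → ℝ) : Euc d → ℝ :=
  η.normed volume ⋆[ContinuousLinearMap.lsmul ℝ ℝ, volume] u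

variable {η : ContDiffBump (0 : Euc d)} {u v : Euc d → ℝ} {B : ℝ}

lemma mollify_apply (x : Euc d) :
    mollify η u x = ∫ t, η.normed volume t * u (x - t) := by
  simp [mollify, convolution_def]

lemma integrable_mollify (hu : Measurable u) (hB : ∀ x, |u x| ≤ B) (x : Euc d) :
    Integrable (fun t => η.normed volume t * u (x - t)) :=
  η.integrable_normed.mul_bdd (c := B)
    (hu.comp (measurable_const.sub measurable_id)).aestronglyMeasurable
    (Eventually.of_forall fun t => hB (x - t))

/-- Mollification is an average over translations, so it preserves inequalities that are affine
and translation invariant. -/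
lemma mollify_le_of_forall_sub (hu : Measurable u) (hB : ∀ x, |u x| ≤ B) (hv : Measurable v)
    (hvB : ∀ x, |v x| ≤ B) {x y : Euc d} {a b : ℝ}
    (h : ∀ t, v (y - t) ≤ a * u (x - t) + b) : mollify η v y ≤ a * mollify η u x + b := by
  have i1 := integrable_mollify (η := η) hu hB x
  rw [mollify_apply, mollify_apply]
  calc ∫ t, η.normed volume t * v (y - t)
      ≤ ∫ t, (a * (η.normed volume t * u (x - t)) + b * η.normed volume t) := by
        refine integral_mono (integrable_mollify hv hvB y)
          ((i1.const_mul a).add (η.integrable_normed.const_mul b)) fun t => ?_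
        have := mul_le_mul_of_nonneg_left (h t) (η.nonneg_normed (μ := volume) t)
        dsimp only
        linarith
    _ = _ := by
        rw [integral_add (i1.const_mul a) (η.integrable_normed.const_mul b), integral_const_mul,
          integral_const_mul, η.integral_normed, mul_one]

lemma abs_mollify_sub_le (hu : Measurable u) {ε δ : ℝ} (hη : η.rOut ≤ δ)
    (huc : ∀ x y, dist x y < δ → dist (u x) (u y) < ε) (x : Euc d) :
    |mollify η u x - u x| ≤ ε := by
  rw [← Real.dist_eq]
  exact η.dist_normed_convolution_le hu.aestronglyMeasurable fun y hy =>
    (huc y x ((Metric.mem_ball.mp hy).trans_le hη)).le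

variable {κ : Kernel ℝ (Euc d)} [IsFiniteKernel κ] {Ξ : ℝ → Euc d → Euc d} {ξ : ℝ → Euc d → ℝ}

/-- The dual upper bound along the flow: if `φ` is dominated by the Hopf–Lax evolution of `w` at
time one, then `∫ φ dκ t - ∫ w dκ s` is at most `L` times the length of the flow between `s` and
`t`, for every positive `L` no smaller than that length. -/
lemma ReactionFlow.dual_le (hF : ReactionFlow κ Ξ ξ) {w φ : Euc d → ℝ}
    (hw : UniformContinuous w) (hφ : UniformContinuous φ) (hwB : ∀ x, |w x| ≤ B)
    (hφB : ∀ x, |φ x| ≤ B)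
    (H : ∀ x₀ x₁ : Euc d, ∀ r : ℝ, 0 ≤ r → φ x₁ ≤ r ^ 2 * w x₀ + coneSq x₀ r x₁ 1)
    {s t L : ℝ} (hs : 0 ≤ s) (hst : s ≤ t) (ht : t ≤ 1) (hL : 0 < L)
    (hΛL : ∫ r in s..t, √(action κ Ξ ξ r) ≤ L) :
    ∫ x, φ x ∂(κ t) - ∫ x, w x ∂(κ s) ≤ L * ∫ r in s..t, √(action κ Ξ ξ r) := by
  set Λ := ∫ r in s..t, √(action κ Ξ ξ r) with hΛ
  set M := (Kernel.bound κ).toReal with hM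
  have hM0 : 0 ≤ M := ENNReal.toReal_nonneg
  refine le_of_forall_pos_le_add fun e he => ?_
  set ε := e / (4 * (M + 1)) with hε
  have hε0 : 0 < ε := by positivity
  obtain ⟨δ₁, hδ₁, h₁⟩ := Metric.uniformContinuous_iff.mp hw ε hε0
  obtain ⟨δ₂, hδ₂, h₂⟩ := Metric.uniformContinuous_iff.mp hφ ε hε0
  set δ := min δ₁ δ₂ with hδ
  have hδ0 : 0 < δ := lt_min hδ₁ hδ₂
  let η : ContDiffBump (0 : Euc d) := ⟨δ / 2, δ, by positivity, by linarith⟩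
  obtain ⟨C, hC⟩ := exists_C2Bound (η := η.normed volume) η.contDiff_normed
    η.hasCompactSupport_normed B
  have hbd : ∀ {τ : ℝ}, τ ≤ 1 → ∀ x, |hopfLax w τ x| ≤ B := fun hτ x => by
    have := le_hopfLax H hτ x
    have := hopfLax_le H hτ x
    have := abs_le.mp (hwB x)
    have := abs_le.mp (hφB x)
    exact abs_le.mpr ⟨by linarith, by linarith⟩
  have hmeas : ∀ {τ : ℝ}, τ ≤ 1 → Measurable (hopfLax w τ) := fun hτ =>
    measurable_hopfLax H hw.continuous hτ
  have hC2 : ∀ {τ : ℝ}, τ ≤ 1 → C2Bound C (mollify η (hopfLax w τ)) := fun hτ =>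
    hC _ (hmeas hτ) (hbd hτ)
  have hC0 : 0 ≤ C := (hC2 zero_le_one).nonneg
  set E := 3 * C ^ 3 * M + (1 + 2 * (3 * C ^ 2) ^ 2 * M) * L with hE
  have hE0 : 0 ≤ E := by positivity
  obtain ⟨k, hk⟩ := exists_nat_gt (max C (2 * E / e))
  set Δ : ℝ := 1 / (k + 1) with hΔ
  have hΔ0 : 0 < Δ := by positivity
  have hkΔ : ((k:ℝ) + 1) * Δ = 1 := by rw [hΔ]; field_simp
  have hΔC : Δ * C ≤ 1 := by
    rw [hΔ, one_div_mul_eq_div, div_le_one (by positivity)]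
    linarith [le_max_left C (2 * E / e)]
  have hEΔ : E * Δ ≤ e / 2 := by
    have h3 : 2 * E / e < k + 1 := by linarith [le_max_right C (2 * E / e)]
    rw [div_lt_iff₀ he] at h3
    rw [hΔ, mul_one_div, div_le_iff₀ (by positivity)]
    linarith
  have hi1 : ∀ {i : ℕ}, i ≤ k + 1 → (i : ℝ) * Δ ≤ 1 := fun {i} hi => by
    rw [← hkΔ]
    gcongr
    exact_mod_cast hi
  -- telescoping over `k + 1` steps of the mollified Hopf–Lax evolution
  have hchain := chain_le (S := fun r => √(action κ Ξ ξ r)) (fun r => Real.sqrt_nonneg _)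
    hF.integrableOn_speed
    (T := fun i r => ∫ x, mollify η (hopfLax w (i * Δ)) x ∂(κ r)) (N := k + 1) (ℓ := L * Δ)
    (L := L) (e := E * Δ ^ 2) (by positivity)
    (fun i hi a b ha hab hb hlen => by
      have hi2 : (i : ℝ) * Δ + Δ ≤ 1 := by
        have := hi1 (Nat.succ_le_of_lt hi)
        push_cast at this
        linarith
      have hi3 : (i : ℝ) * Δ ≤ 1 := by linarith
      have e1 : ((i + 1 : ℕ) : ℝ) * Δ = i * Δ + Δ := by push_cast; ring
      rw [e1]
      refine hF.step (hC2 hi3) (hC2 hi2) (by positivity) hL hΔ0 (fun x => ?_) ha hab hb hlen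
      refine (hC2 hi3).hamiltonJacobi_step hΔ0 hΔC (fun x₀ x₁ r hr => ?_) x
      refine mollify_le_of_forall_sub (hmeas hi3) (hbd hi3) (hmeas hi2) (hbd hi2) fun t => ?_
      have h3 := hopfLax_step H (by positivity : 0 ≤ (i : ℝ) * Δ) hΔ0 hi2 (x₀ - t) (x₁ - t) hr
      rwa [show coneSq (x₀ - t) r (x₁ - t) 1 = coneSq x₀ r x₁ 1 by
        unfold coneSq; rw [dist_sub_right]] at h3)
    ht k 0 (by omega) s hs hst (by
      rw [show ((k:ℝ) + 1) * (L * Δ) = L * ((k + 1) * Δ) by ring, hkΔ, mul_one]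
      exact hΛL)
  have e1 : ((0 + (k + 1) : ℕ) : ℝ) * Δ = 1 := by rw [zero_add]; push_cast; exact hkΔ
  have e2 : ((k:ℝ) + 1) * (E * Δ ^ 2) = E * Δ := by
    calc ((k:ℝ) + 1) * (E * Δ ^ 2) = E * Δ * ((k + 1) * Δ) := by ring
      _ = _ := by rw [hkΔ, mul_one]
  rw [e1, e2, Nat.cast_zero, zero_mul, ← hΛ] at hchain
  have hmass : ∀ r, (κ r).real univ ≤ M := fun r =>
    ENNReal.toReal_mono (Kernel.bound_ne_top κ) (Kernel.measure_le_bound κ r univ)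
  have hcompare : ∀ (f g : Euc d → ℝ) (r : ℝ), Integrable f (κ r) → Integrable g (κ r) →
      (∀ x, f x ≤ g x + ε) → ∫ x, f x ∂(κ r) ≤ ∫ x, g x ∂(κ r) + M * ε := fun f g r hf hg h => by
    calc ∫ x, f x ∂(κ r) ≤ ∫ x, (g x + ε) ∂(κ r) :=
          integral_mono hf (hg.add (integrable_const _)) h
      _ = ∫ x, g x ∂(κ r) + (κ r).real univ * ε := by
          rw [integral_add hg (integrable_const _), integral_const, smul_eq_mul]
      _ ≤ _ := by
          gcongr
          exact hmass r
  have hend : ∫ x, φ x ∂(κ t) ≤ ∫ x, mollify η (hopfLax w 1) x ∂(κ t) + M * ε := by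
    refine hcompare _ _ _ (integrable_of_bound hφ.continuous.measurable hφB)
      ((hC2 le_rfl).toC1Bound.integrable _) fun x => ?_
    have h3 := abs_le.mp (abs_mollify_sub_le (η := η) hφ.continuous.measurable (min_le_right δ₁ δ₂)
      (fun x y => h₂ (a := x) (b := y)) x)
    have h4 : mollify η φ x ≤ 1 * mollify η (hopfLax w 1) x + 0 :=
      mollify_le_of_forall_sub (hmeas le_rfl) (hbd le_rfl) hφ.continuous.measurable hφB
        fun t => by simpa using le_hopfLax H le_rfl (x - t)
    linarith [h3.1]
  have hstart : ∫ x, mollify η (hopfLax w 0) x ∂(κ s) ≤ ∫ x, w x ∂(κ s) + M * ε := by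
    refine hcompare _ _ _ ((hC2 zero_le_one).toC1Bound.integrable _)
      (integrable_of_bound hw.continuous.measurable hwB) fun x => ?_
    have h3 := abs_le.mp (abs_mollify_sub_le (η := η) hw.continuous.measurable (min_le_left δ₁ δ₂)
      (fun x y => h₁ (a := x) (b := y)) x)
    rw [show hopfLax w 0 = w from funext hopfLax_zero]
    linarith [h3.2]
  have hMε : M * ε ≤ e / 4 := by
    rw [hε, mul_div_assoc', div_le_div_iff₀ (by positivity) (by norm_num)]
    nlinarith
  linarith

end mollifiedHopfLax

section projection
variable {d : ℕ}

/-- The nearest-point projection onto a nonempty compact convex set. -/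
lemma exists_projection {Ω : Set (Euc d)} (hΩ : IsCompact Ω) (hc : Convex ℝ Ω) (hne : Ω.Nonempty) :
    ∃ P : Euc d → Euc d, (∀ x, P x ∈ Ω) ∧ (∀ x ∈ Ω, P x = x) ∧
      ∀ x y, dist (P x) (P y) ≤ dist x y := by
  have hex : ∀ x : Euc d, ∃ p ∈ Ω, ∀ q ∈ Ω, inner ℝ (x - p) (q - p) ≤ 0 := fun x => by
    obtain ⟨p, hp, hpx⟩ := exists_norm_eq_iInf_of_complete_convex hne hΩ.isComplete hc x
    exact ⟨p, hp, (norm_eq_iInf_iff_real_inner_le_zero hc hp).mp hpx⟩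
  choose P hP hPi using hex
  refine ⟨P, hP, fun x hx => ?_, fun x y => ?_⟩
  · have := hPi x x hx
    rw [real_inner_self_eq_norm_sq] at this
    have h0 : ‖x - P x‖ = 0 := by nlinarith [norm_nonneg (x - P x)]
    exact (sub_eq_zero.mp (norm_eq_zero.mp h0)).symm
  · rw [dist_eq_norm, dist_eq_norm]
    have h1 := hPi x (P y) (hP y)
    have h2 := hPi y (P x) (hP x)
    have h3 : ‖P x - P y‖ ^ 2 ≤ inner ℝ (x - y) (P x - P y) := by
      have e : inner ℝ (x - y) (P x - P y) - ‖P x - P y‖ ^ 2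
          = -inner ℝ (x - P x) (P y - P x) - inner ℝ (y - P y) (P x - P y) := by
        rw [← real_inner_self_eq_norm_sq]
        simp only [inner_sub_left, inner_sub_right]
        ring
      linarith
    have h4 := real_inner_le_norm (x - y) (P x - P y)
    by_contra! hlt
    have h5 : 0 < ‖P x - P y‖ := (norm_nonneg _).trans_lt hlt
    nlinarith

/-- A dual admissible pair on `Ω` extends, by composition with the projection, to the whole space
in the normalised form `r₁ = 1`. -/
lemma dual_extend {Ω : Set (Euc d)} {φ₀ φ₁ : Euc d → ℝ}
    (h : ∀ z : PlanSpace Ω,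
      (z.2.2 : ℝ) * φ₀ z.1 + (1 - (z.2.2 : ℝ)) * φ₁ z.2.1 ≤ unitCost Ω z)
    {P : Euc d → Euc d} (hP : ∀ x, P x ∈ Ω) (hPd : ∀ x y, dist (P x) (P y) ≤ dist x y)
    (x₀ x₁ : Euc d) {r : ℝ} (hr : 0 ≤ r) :
    φ₁ (P x₁) ≤ r ^ 2 * -φ₀ (P x₀) + coneSq x₀ r x₁ 1 := by
  have hpos : (0:ℝ) < 1 + r ^ 2 := by positivity
  set p : ℝ := r ^ 2 / (1 + r ^ 2) with hp
  have hp0 : 0 ≤ p := by positivity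
  have hp1 : 1 - p = 1 / (1 + r ^ 2) := by rw [hp]; field_simp; ring
  have hp2 : p ≤ 1 := by have : 0 ≤ 1 - p := hp1 ▸ by positivity
                         linarith
  have h1 := h (⟨P x₀, hP x₀⟩, ⟨P x₁, hP x₁⟩, ⟨p, hp0, hp2⟩)
  unfold unitCost at h1
  dsimp only at h1
  have h2 := mul_le_mul_of_nonneg_left h1 hpos.le
  have e0 : (1 + r ^ 2) * coneSq (P x₀) √p (P x₁) √(1 - p) = coneSq (P x₀) r (P x₁) 1 := by
    have := coneSq_smul √(1 + r ^ 2) (P x₀) √p (P x₁) √(1 - p)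
    rw [Real.sq_sqrt hpos.le, ← Real.sqrt_mul hpos.le, ← Real.sqrt_mul hpos.le, hp1,
      mul_one_div_cancel hpos.ne', hp, mul_div_cancel₀ _ hpos.ne', Real.sqrt_sq hr,
      Real.sqrt_one] at this
    rw [hp1, hp]
    exact this.symm
  have e1 : (1 + r ^ 2) * (p * φ₀ (P x₀) + (1 - p) * φ₁ (P x₁)) = r ^ 2 * φ₀ (P x₀) + φ₁ (P x₁) := by
    rw [hp1, hp]; field_simp
  rw [e0, e1] at h2
  have h3 : coneSq (P x₀) r (P x₁) 1 ≤ coneSq x₀ r x₁ 1 := by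
    unfold coneSq
    have := cosPi_anti (dist_nonneg (x := P x₁) (y := P x₀)) (hPd x₁ x₀)
    nlinarith
  linarith

end projection

section main
variable {d : ℕ}
open ProbabilityTheory Filter Topology

/-- The Hellinger–Kantorovich distance is at most the length of the flow: duality reduces the
squared distance to `ReactionFlow.dual_le`, applied to a dual pair extended off `Ω` by the
projection. -/
lemma ReactionFlow.HK_le {κ : Kernel ℝ (Euc d)} [IsFiniteKernel κ] {Ξ : ℝ → Euc d → Euc d}
    {ξ : ℝ → Euc d → ℝ} (hF : ReactionFlow κ Ξ ξ) {Ω : Set (Euc d)} (hΩ : IsCompact Ω)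
    (hc : Convex ℝ Ω) (hsupp : ∀ t ∈ Icc (0:ℝ) 1, κ t Ωᶜ = 0) {s t : ℝ} (hs : 0 ≤ s) (hst : s ≤ t)
    (ht : t ≤ 1) : HK Ω (κ s) (κ t) ≤ ∫ r in s..t, √(action κ Ξ ξ r) := by
  set Λ := ∫ r in s..t, √(action κ Ξ ξ r) with hΛ
  have hΛ0 : 0 ≤ Λ := intervalIntegral.integral_nonneg hst fun r _ => Real.sqrt_nonneg _
  have hss := hsupp s ⟨hs, hst.trans ht⟩
  have htt := hsupp t ⟨hs.trans hst, ht⟩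
  have key : ∀ L, 0 < L → Λ ≤ L → HK2 Ω (κ s) (κ t) ≤ L * Λ := by
    intro L hL hΛL
    refine HK2_le_of_dual hΩ fun φ₀ φ₁ hφ => ?_
    rcases Ω.eq_empty_or_nonempty with he | hne
    · subst he
      rw [compl_empty, Measure.measure_univ_eq_zero] at hss htt
      rw [hss, htt]
      simp only [integral_zero_measure, add_zero]
      positivity
    obtain ⟨P, hP, hPΩ, hPd⟩ := exists_projection hΩ hc hne
    have hPu : UniformContinuous P := (LipschitzWith.of_dist_le_mul (K := 1) fun x y => by
      simpa using hPd x y).uniformContinuous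
    have huc : ∀ f : BoundedContinuousFunction (Euc d) ℝ, UniformContinuous fun x => f (P x) := by
      intro f
      rw [Metric.uniformContinuous_iff]
      intro ε hε
      obtain ⟨δ, hδ, h⟩ := Metric.uniformContinuousOn_iff.mp
        (hΩ.uniformContinuousOn_of_continuous f.continuous.continuousOn) ε hε
      exact ⟨δ, hδ, fun {a b} hab => h _ (hP a) _ (hP b) ((hPd a b).trans_lt hab)⟩
    have hext : ∀ (f : BoundedContinuousFunction (Euc d) ℝ) (r : ℝ), κ r Ωᶜ = 0 →
        ∫ x, f x ∂(κ r) = ∫ x, f (P x) ∂(κ r) := fun f r hr => by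
      refine integral_congr_ae ?_
      have : ∀ᵐ x ∂(κ r), x ∈ Ω := hr
      filter_upwards [this] with x hx
      rw [hPΩ x hx]
    have hd := hF.dual_le (w := fun x => -φ₀ (P x)) (φ := fun x => φ₁ (P x))
      (B := max ‖φ₀‖ ‖φ₁‖) (huc φ₀).neg (huc φ₁)
      (fun x => by rw [abs_neg]; exact (φ₀.norm_coe_le_norm _).trans (le_max_left _ _))
      (fun x => (φ₁.norm_coe_le_norm _).trans (le_max_right _ _))
      (fun x₀ x₁ r hr => dual_extend hφ hP hPd x₀ x₁ hr) hs hst ht hL hΛL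
    rw [integral_neg, sub_neg_eq_add, add_comm, ← hext φ₀ s hss, ← hext φ₁ t htt] at hd
    exact hd
  refine Real.sqrt_le_iff.mpr ⟨hΛ0, le_of_forall_pos_le_add fun e he => ?_⟩
  refine (key (Λ + e / (Λ + 1)) (by positivity) (by linarith [show 0 ≤ e / (Λ + 1) by positivity])
    ).trans ?_
  have : e / (Λ + 1) * Λ ≤ e := by
    rw [div_mul_eq_mul_div, div_le_iff₀ (by positivity)]
    nlinarith
  nlinarith

end main

/-- Let `(μ_t)` be a weakly continuous family of finite measures on
`Ω` and `Ξ, ξ` Borel fields with finite total action, satisfying the continuity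
equation with reaction `∂_t μ + div(Ξμ) = 4ξμ` in the distributional sense. Then
`HK(μ_s, μ_t) ≤ ∫_s^t (∫_Ω (|Ξ|² + 4ξ²) dμ_r)^{1/2} dr` for all `0 ≤ s ≤ t ≤ 1`;
in particular the curve is absolutely continuous with respect to `HK`. -/
theorem continuityEquation_HK_upper_bound {d : ℕ} (hd : 1 ≤ d) (Ω : Set (Euc d))
    (hΩc : IsCompact Ω) (hΩconv : Convex ℝ Ω)
    (μ : ℝ → Measure (Euc d))
    (hfin : ∀ t ∈ Icc (0:ℝ) 1, IsFiniteMeasure (μ t))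
    (hsupp : ∀ t ∈ Icc (0:ℝ) 1, μ t Ωᶜ = 0)
    (hweakcont : ∀ φ : BoundedContinuousFunction (Euc d) ℝ,
      ContinuousOn (fun t => ∫ x, φ x ∂(μ t)) (Icc (0:ℝ) 1))
    (Ξ : ℝ → Euc d → Euc d) (ξ : ℝ → Euc d → ℝ)
    (hΞ : Measurable (fun p : ℝ × Euc d => Ξ p.1 p.2))
    (hξ : Measurable (fun p : ℝ × Euc d => ξ p.1 p.2))
    (haction : ∫⁻ t in Icc (0:ℝ) 1,
        ∫⁻ x, ENNReal.ofReal (‖Ξ t x‖^2 + 4 * (ξ t x)^2) ∂(μ t) < ⊤)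
    (hce : ∀ φ : Euc d → ℝ, ContDiff ℝ 1 φ →
      ∀ ψ : ℝ → ℝ, ContDiff ℝ 1 ψ → HasCompactSupport ψ → tsupport ψ ⊆ Ioo (0:ℝ) 1 →
      ∫ t in (0:ℝ)..1,
        (deriv ψ t * ∫ x, φ x ∂(μ t)
          + ψ t * ∫ x, (fderiv ℝ φ x (Ξ t x) + 4 * ξ t x * φ x) ∂(μ t)) = 0) :
    ∀ s t : ℝ, 0 ≤ s → s ≤ t → t ≤ 1 →
      HK Ω (μ s) (μ t)
        ≤ ∫ r in s..t, Real.sqrt (∫ x, (‖Ξ r x‖^2 + 4 * (ξ r x)^2) ∂(μ r)) := by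
  obtain ⟨κ, hκ, hκμ⟩ := exists_kernel μ hfin hweakcont
  have hF : ReactionFlow κ Ξ ξ := by
    refine ⟨hΞ, hξ, fun φ => (hweakcont φ).congr fun t ht => by rw [hκμ t ht], ?_,
      fun φ hφ ψ hψ hψc hψs => ?_⟩
    · refine lt_of_eq_of_lt (setLIntegral_congr_fun measurableSet_Icc fun t ht => ?_) haction
      rw [hκμ t ht]
    · refine Eq.trans ?_ (hce φ hφ ψ hψ hψc hψs)
      refine intervalIntegral.integral_congr fun t ht => ?_
      rw [uIcc_of_le zero_le_one] at ht
      rw [hκμ t ht]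
  intro s t hs hst ht
  have h := hF.HK_le hΩc hΩconv (fun t ht => by rw [hκμ t ht]; exact hsupp t ht) hs hst ht
  rw [hκμ s ⟨hs, hst.trans ht⟩, hκμ t ⟨hs.trans hst, ht⟩] at h
  have e : ∫ r in s..t, √(action κ Ξ ξ r)
      = ∫ r in s..t, Real.sqrt (∫ x, (‖Ξ r x‖^2 + 4 * (ξ r x)^2) ∂(μ r)) := by
    refine intervalIntegral.integral_congr fun r hr => ?_
    rw [uIcc_of_le hst] at hr
    simp only [action]
    rw [hκμ r ⟨hs.trans hr.1, hr.2.trans ht⟩]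
  exact h.trans e.le
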